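/- arXiv:2101.12327 — 5 statements merged into one kernel-verified Lean document; each statement's English description precedes it below -/
import Mathlib

section
/- Let n and k be integers with n ≥ k ≥ 4, and assume that n ≥ 5 or k ≥ 5. Then S_k(n) = 2^{t_{k-1}(n)}, and the Turán graph T_{k-1}(n) is the unique n-vertex graph G with S_k(G) = 2^{t_{k-1}(n)} (i.e., the unique 𝓢_k-extremal graph on n vertices). -/
open scoped Classical

noncomputable section

universe u

variable {V : Type u}

/-- An orientation of a simple graph `G`: a relation choosing exactly one
direction for each edge of `G`. -/
abbrev SimpleGraph.Orient (G : SimpleGraph V) : Type u :=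
  {D : V → V → Prop // (∀ u v, D u v → G.Adj u v) ∧ ∀ u v, G.Adj u v → (D u v ↔ ¬ D v u)}

/-- A family of tournaments: for each `k`, a set of orientations of the
complete graph on `k` vertices. -/
abbrev TournFamily : Type :=
  ∀ k : ℕ, Set ((⊤ : SimpleGraph (Fin k)).Orient)

/-- The orientation `D` of `G` contains a copy of the `k`-vertex tournament `T`. -/
def ContainsCopy {G : SimpleGraph V} (D : G.Orient) {k : ℕ}
    (T : (⊤ : SimpleGraph (Fin k)).Orient) : Prop :=
  ∃ φ : Fin k → V, Function.Injective φ ∧ ∀ i j, T.1 i j → D.1 (φ i) (φ j)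

/-- The orientation `D` is `F`-free: it contains no copy of a member of `F`. -/
def FreeOrient {G : SimpleGraph V} (F : TournFamily) (D : G.Orient) : Prop :=
  ∀ (k : ℕ) (T : (⊤ : SimpleGraph (Fin k)).Orient), T ∈ F k → ¬ ContainsCopy D T

/-- `D(G, F)`: the number of `F`-free orientations of the graph `G`. -/
def numOrient (G : SimpleGraph V) (F : TournFamily) : ℕ :=
  Nat.card {D : G.Orient // FreeOrient F D}

/-- `D(n, F)`: the maximum of `D(G, F)` over all `n`-vertex graphs `G`. -/
def maxOrient (n : ℕ) (F : TournFamily) : ℕ :=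
  sSup (Set.range fun G : SimpleGraph (Fin n) => numOrient G F)

/-- A tournament is strongly connected if there is a directed path between
every ordered pair of vertices. -/
def IsStrongTourn {k : ℕ} (T : (⊤ : SimpleGraph (Fin k)).Orient) : Prop :=
  ∀ u v : Fin k, Relation.ReflTransGen T.1 u v

/-- `𝓢 k`: the family of strongly connected tournaments on `k` vertices. -/
def SFam (k : ℕ) : TournFamily := fun m => {T | m = k ∧ IsStrongTourn T}

/-- `t r n`: the number of edges of the `r`-partite Turán graph on `n` vertices. -/
def turanNum (r n : ℕ) : ℕ := (SimpleGraph.turanGraph n r).edgeFinset.card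

/-- The exact value of `turanNum`, cleared of denominators. -/
lemma turanNum_formula (r n : ℕ) (hr : 0 < r) :
    2 * r * turanNum r n + (n % r) * (r - n % r) = (r - 1) * n ^ 2 := by
  have h : turanNum r n = (n ^ 2 - (n % r) ^ 2) * (r - 1) / (2 * r) + (n % r).choose 2 := by
    unfold turanNum
    rw [← SimpleGraph.card_edgeFinset_turanGraph]
  have hb : n % r < r := Nat.mod_lt _ hr
  obtain ⟨s, rfl⟩ : ∃ s, r = s + 1 := ⟨r - 1, by omega⟩
  set b := n % (s + 1) with hbdef
  set q := n / (s + 1) with hq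
  have hn : n = (s + 1) * q + b := (Nat.div_add_mod n (s + 1)).symm
  obtain ⟨c, hc⟩ : ∃ c, s + 1 = b + c := ⟨s + 1 - b, by omega⟩
  have hch : 2 * b.choose 2 + b = b * b := by
    rw [Nat.choose_two_right, Nat.mul_div_cancel' (Nat.even_mul_pred_self b).two_dvd]
    cases b <;> simp; ring
  have hsq : n ^ 2 - b ^ 2 = (s + 1) * (q * ((s + 1) * q + 2 * b)) := by
    rw [hn]; apply Nat.sub_eq_of_eq_add; ring
  have hev : 2 ∣ q * ((s + 1) * q + 2 * b) * s := by
    have h1 : Even (q * ((s + 1) * q) * s) := by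
      rcases Nat.even_or_odd s with h | h
      · exact h.mul_left _
      · exact ((((h.add_odd odd_one).mul_right q).mul_left q)).mul_right s
    have := h1.two_dvd
    obtain ⟨z, hz⟩ := this
    exact ⟨z + q * b * s, by rw [mul_add, add_mul, hz]; ring⟩
  obtain ⟨z, hz⟩ := hev
  have hdiv : (n ^ 2 - b ^ 2) * (s + 1 - 1) / (2 * (s + 1)) = z := by
    rw [hsq]
    apply Nat.div_eq_of_eq_mul_left (by positivity)
    simp only [Nat.add_sub_cancel]
    calc _ = (s + 1) * (q * ((s + 1) * q + 2 * b) * s) := by ring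
      _ = _ := by rw [hz]; ring
  rw [h, hdiv]
  have e1 : s + 1 - b = c := by omega
  rw [e1]
  simp only [Nat.add_sub_cancel]
  rw [hn]
  zify at hz hch hc ⊢
  linear_combination (s + 1 : ℤ) * (-hz) + (s + 1 : ℤ) * hch - b * hc

/-- Joining Turán graphs on `m` and `w` vertices: the number of cross edges is at least
`(1 - 1 / r) * m * w`. -/
lemma turanNum_add (r m w : ℕ) (hr : 0 < r) :
    r * turanNum r m + r * turanNum r w + (r - 1) * (m * w) ≤ r * turanNum r (m + w) := by
  have h1 := turanNum_formula r m hr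
  have h2 := turanNum_formula r w hr
  have h3 := turanNum_formula r (m + w) hr
  have hm := Nat.mod_lt m hr
  have hw := Nat.mod_lt w hr
  have hadd := Nat.add_mod m w r
  set a := m % r
  set b := w % r
  have key : ((m + w) % r) * (r - (m + w) % r) ≤ a * (r - a) + b * (r - b) := by
    rw [hadd]
    rcases lt_or_ge (a + b) r with h | h
    · rw [Nat.mod_eq_of_lt h]
      obtain ⟨c, hc⟩ : ∃ c, r = a + b + c := ⟨r - a - b, by omega⟩
      have e1 : r - (a + b) = c := by omega
      have e2 : r - a = b + c := by omega
      have e3 : r - b = a + c := by omega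
      rw [e1, e2, e3]; nlinarith [Nat.zero_le (a * b)]
    · obtain ⟨x, hx⟩ : ∃ x, a + b = r + x := ⟨a + b - r, by omega⟩
      have : (a + b) % r = x := by
        rw [hx, Nat.add_mod_left, Nat.mod_eq_of_lt (by omega)]
      rw [this]
      obtain ⟨y, hy⟩ : ∃ y, r = a + y := ⟨r - a, by omega⟩
      obtain ⟨z, hz⟩ : ∃ z, r = b + z := ⟨r - b, by omega⟩
      have e1 : r - x = y + z := by omega
      have e2 : r - a = y := by omega
      have e3 : r - b = z := by omega
      have e4 : a = x + z := by omega
      have e5 : b = x + y := by omega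
      rw [e1, e2, e3, e4, e5]; nlinarith [Nat.zero_le (y * z)]
  have : (r - 1) * (m + w) ^ 2 = (r - 1) * m ^ 2 + (r - 1) * w ^ 2 + 2 * ((r - 1) * (m * w)) := by
    ring
  nlinarith

lemma choose_two_le_turanNum (r w : ℕ) (hr : 0 < r) (hw : w ≤ r) : w.choose 2 ≤ turanNum r w := by
  have h := turanNum_formula r w hr
  have hch : 2 * w.choose 2 + w = w * w := by
    rw [Nat.choose_two_right, Nat.mul_div_cancel' (Nat.even_mul_pred_self w).two_dvd]
    cases w <;> simp; ring
  obtain ⟨s, rfl⟩ : ∃ s, r = s + 1 := ⟨r - 1, by omega⟩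
  simp only [Nat.add_sub_cancel] at h
  refine le_of_mul_le_mul_left (a := 2 * (s + 1)) ?_ (by positivity)
  rcases hw.lt_or_eq with hlt | rfl
  · rw [Nat.mod_eq_of_lt hlt] at h
    obtain ⟨c, hc⟩ : ∃ c, s + 1 = w + c := ⟨s + 1 - w, by omega⟩
    rw [show s + 1 - w = c by omega] at h
    zify at h hch hc ⊢
    nlinarith
  · simp only [Nat.mod_self, zero_mul, add_zero] at h
    zify at h hch ⊢
    nlinarith

lemma add_two_pow_three_le (j : ℕ) (hj : 1 ≤ j) : (j + 2) ^ 3 ≤ 2 ^ (2 * j + 3) := by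
  induction j, hj using Nat.le_induction with
  | base => norm_num
  | succ j hj ih =>
    rw [show 2 * (j + 1) + 3 = 2 * j + 3 + 2 by ring, pow_add]
    nlinarith [pow_le_pow_left₀ (Nat.zero_le _) hj 3, pow_le_pow_left₀ (Nat.zero_le _) hj 2]

lemma two_mul_add_two_pow_three_le (j : ℕ) (hj : 2 ≤ j) : 2 * (j + 2) ^ 3 ≤ 2 ^ (2 * j + 3) := by
  induction j, hj using Nat.le_induction with
  | base => norm_num
  | succ j hj ih =>
    rw [show 2 * (j + 1) + 3 = 2 * j + 3 + 2 by ring, pow_add]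
    nlinarith [pow_le_pow_left₀ (Nat.zero_le _) hj 3, pow_le_pow_left₀ (Nat.zero_le _) hj 2]

lemma add_three_pow_three_le (j : ℕ) (hj : 2 ≤ j) : (j + 3) ^ 3 ≤ 2 ^ (2 * j + 3) := by
  induction j, hj using Nat.le_induction with
  | base => norm_num
  | succ j hj ih =>
    rw [show 2 * (j + 1) + 3 = 2 * j + 3 + 2 by ring, pow_add]
    nlinarith [pow_le_pow_left₀ (Nat.zero_le _) hj 3, pow_le_pow_left₀ (Nat.zero_le _) hj 2]

/-- If `x ^ 3 ≤ 2 ^ (2 * j + 3)` then `x * 2 ^ (r - 2)` is at most `2 ^ ((1 - 1 / r) * (r + j))`. -/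
lemma mul_two_pow_pow_le {r j x m c : ℕ} (hr : 3 ≤ r) (hx : x ^ 3 ≤ 2 ^ (2 * j + 3))
    (hc : (r - 1) * (m * (r + j)) ≤ r * c) : (x * 2 ^ (r - 2)) ^ m ≤ 2 ^ c := by
  obtain ⟨s, rfl⟩ : ∃ s, r = s + 3 := ⟨r - 3, by omega⟩
  have e1 : s + 3 - 1 = s + 2 := by omega
  have e2 : s + 3 - 2 = s + 1 := by omega
  rw [e1] at hc
  rw [e2]
  refine le_of_pow_le_pow_left₀ (n := 3 * (s + 3)) (by positivity) (by positivity) ?_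
  calc ((x * 2 ^ (s + 1)) ^ m) ^ (3 * (s + 3))
      = (x ^ 3) ^ (m * (s + 3)) * 2 ^ ((s + 1) * (m * (3 * (s + 3)))) := by
        rw [mul_pow, mul_pow, ← pow_mul, ← pow_mul, ← pow_mul, ← pow_mul]; ring_nf
    _ ≤ (2 ^ (2 * j + 3)) ^ (m * (s + 3)) * 2 ^ ((s + 1) * (m * (3 * (s + 3)))) := by gcongr
    _ = 2 ^ ((2 * j + 3) * (m * (s + 3)) + (s + 1) * (m * (3 * (s + 3)))) := by
        rw [← pow_mul, ← pow_add]
    _ ≤ 2 ^ (c * (3 * (s + 3))) := by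
        apply Nat.pow_le_pow_right (by norm_num)
        nlinarith [Nat.zero_le (m * s * j)]
    _ = _ := by rw [pow_mul]

lemma ext_pow_lt (m c : ℕ) (hm : 1 ≤ m) (hc : 8 * m + 15 ≤ 3 * c) :
    224 * 6 ^ (m - 1) < 2 ^ c := by
  induction m using Nat.strong_induction_on generalizing c with
  | _ m ih =>
    rcases lt_or_ge m 4 with h | h
    · interval_cases m
      · calc _ < 2 ^ 8 := by norm_num
          _ ≤ _ := Nat.pow_le_pow_right (by norm_num) (by omega)
      · calc _ < 2 ^ 11 := by norm_num
          _ ≤ _ := Nat.pow_le_pow_right (by norm_num) (by omega)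
      · calc _ < 2 ^ 13 := by norm_num
          _ ≤ _ := Nat.pow_le_pow_right (by norm_num) (by omega)
    · have := ih (m - 3) (by omega) (c - 8) (by omega) (by omega)
      rw [show m - 1 = (m - 3 - 1) + 3 by omega, show c = (c - 8) + 8 by omega, pow_add, pow_add]
      omega

/-- `D` is strongly connected on `S`: every property that is closed under out-neighbours inside `S`
and holds somewhere on `S` holds on all of `S`. -/
def StrongOn (D : V → V → Prop) (S : Finset V) : Prop :=
  ∀ p : V → Prop, (∀ u ∈ S, ∀ w ∈ S, p u → D u w → p w) → ∀ u ∈ S, p u → ∀ w ∈ S, p w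

/-- `D` restricts to a tournament on `S`. -/
def TournOn (D : V → V → Prop) (S : Finset V) : Prop :=
  ∀ u ∈ S, ∀ w ∈ S, u ≠ w → (D u w ↔ ¬ D w u)

/-- `D` and `E` coincide on pairs of elements of `A`. -/
def AgreeOn (D E : V → V → Prop) (A : Finset V) : Prop :=
  ∀ u ∈ A, ∀ w ∈ A, (D u w ↔ E u w)

lemma StrongOn.congr {D E : V → V → Prop} {S : Finset V} (h : AgreeOn D E S) (hD : StrongOn D S) :
    StrongOn E S :=
  fun p hp => hD p fun u hu w hw hpu hd => hp u hu w hw hpu ((h u hu w hw).1 hd)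

lemma AgreeOn.mono {D E : V → V → Prop} {A B : Finset V} (h : AgreeOn D E B) (hAB : A ⊆ B) :
    AgreeOn D E A := fun u hu w hw => h u (hAB hu) w (hAB hw)

lemma AgreeOn.symm {D E : V → V → Prop} {A : Finset V} (h : AgreeOn D E A) :
    AgreeOn E D A := fun u hu w hw => (h u hu w hw).symm

lemma TournOn.mono {D : V → V → Prop} {A B : Finset V} (h : TournOn D B) (hAB : A ⊆ B) :
    TournOn D A := fun u hu w hw => h u (hAB hu) w (hAB hw)

section
variable [DecidableEq V]

lemma StrongOn.insert_vertex {D : V → V → Prop} {S : Finset V} (hS : StrongOn D S) {v a b : V}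
    (ha : a ∈ S) (hb : b ∈ S) (hva : D v a) (hbv : D b v) : StrongOn D (insert v S) := by
  intro p hp u hu hpu
  have hS' := hS p fun u hu w hw => hp u (Finset.mem_insert_of_mem hu) w (Finset.mem_insert_of_mem hw)
  have hv := Finset.mem_insert_self v S
  have hall : ∀ w ∈ S, p w := by
    rcases Finset.mem_insert.1 hu with rfl | hu
    · exact hS' a ha (hp _ hv _ (Finset.mem_insert_of_mem ha) hpu hva)
    · exact hS' u hu hpu
  intro w hw
  rcases Finset.mem_insert.1 hw with rfl | hw
  · exact hp _ (Finset.mem_insert_of_mem hb) _ hv (hall b hb) hbv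
  · exact hall w hw

/-- A set all of whose elements lie on triangles through a common arc `b → a` is strong. -/
lemma strongOn_insert_insert {D : V → V → Prop} {S : Finset V} (hS : S.Nonempty) {a b : V}
    (ha : ∀ s ∈ S, D a s) (hb : ∀ s ∈ S, D s b) (hba : D b a) :
    StrongOn D (insert a (insert b S)) := by
  obtain ⟨s, hs⟩ := hS
  intro p hp u hu hpu
  have hmS : ∀ x ∈ S, x ∈ insert a (insert b S) := fun x hx => by simp [hx]
  have hma : a ∈ insert a (insert b S) := by simp
  have hmb : b ∈ insert a (insert b S) := by simp
  have hab : p b → p a := fun h => hp b hmb a hma h hba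
  have hpa : p a := by
    rcases Finset.mem_insert.1 hu with rfl | hu
    · exact hpu
    rcases Finset.mem_insert.1 hu with rfl | hu
    · exact hab hpu
    · exact hab (hp u (hmS u hu) b hmb hpu (hb u hu))
  have hpS : ∀ x ∈ S, p x := fun x hx => hp a hma x (hmS x hx) hpa (ha x hx)
  intro w hw
  rcases Finset.mem_insert.1 hw with rfl | hw
  · exact hpa
  rcases Finset.mem_insert.1 hw with rfl | hw
  · exact hp s (hmS s hs) w hmb (hpS s hs) (hb s hs)
  · exact hpS w hw

/-- A closed walk along a path and back through a vertex `y` gives a strong set. -/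
lemma strongOn_insert_chain {D : V → V → Prop} {x y z : V} {l : List V}
    (hl : (x :: l).IsChain (fun a b => D b a)) (hz : (x :: l).getLast? = some z)
    (hyz : D y z) (hxy : D x y) : StrongOn D (insert y (x :: l).toFinset) := by
  intro p hp u hu hpu
  have hm : ∀ w ∈ x :: l, w ∈ insert y (x :: l).toFinset := fun w hw =>
    Finset.mem_insert_of_mem (List.mem_toFinset.2 hw)
  have hmy : y ∈ insert y (x :: l).toFinset := Finset.mem_insert_self _ _
  -- `p` propagates from the last vertex of a sublist to all of it, and from any vertex to its head
  have down : ∀ t : List V, (∀ w ∈ t, w ∈ x :: l) → t.IsChain (fun a b => D b a) →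
      ∀ z, t.getLast? = some z → p z → ∀ w ∈ t, p w := by
    intro t
    induction t with
    | nil => simp
    | cons a t ih =>
      intro hsub hch z hlast hpz
      cases t with
      | nil => simp at hlast; simpa [hlast] using hpz
      | cons b t =>
        rw [List.isChain_cons_cons] at hch
        have := ih (fun w hw => hsub w (List.mem_cons_of_mem _ hw)) hch.2 z (by simpa using hlast) hpz
        intro w hw
        rcases List.mem_cons.1 hw with rfl | hw
        · exact hp b (hm _ (hsub _ (by simp))) _ (hm _ (hsub _ (by simp))) (this b (by simp)) hch.1
        · exact this w hw
  have up : ∀ t : List V, ∀ a, (∀ w ∈ a :: t, w ∈ x :: l) → (a :: t).IsChain (fun a b => D b a) →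
      ∀ w ∈ a :: t, p w → p a := by
    intro t
    induction t with
    | nil => intro a _ _ w hw hpw; simp at hw; rwa [← hw]
    | cons b t ih =>
      intro a hsub hch w hw hpw
      rw [List.isChain_cons_cons] at hch
      rcases List.mem_cons.1 hw with rfl | hw
      · exact hpw
      · exact hp b (hm _ (hsub _ (by simp))) _ (hm _ (hsub _ (by simp)))
          (ih b (fun w hw => hsub w (List.mem_cons_of_mem _ hw)) hch.2 w hw hpw) hch.1
  have hpy : p y := by
    rcases Finset.mem_insert.1 hu with rfl | hu
    · exact hpu
    · exact hp x (hm x (by simp)) y hmy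
        (up l x (fun _ h => h) hl u (List.mem_toFinset.1 hu) hpu) hxy
  have hzm : z ∈ x :: l := List.mem_of_getLast? hz
  have hpz : p z := hp y hmy z (hm z hzm) hpy hyz
  intro w hw
  rcases Finset.mem_insert.1 hw with rfl | hw
  · exact hpy
  · exact down _ (fun _ h => h) hl z hz hpz w (List.mem_toFinset.1 hw)

/-- A proper strong subset `T` of a strong tournament `S` can be enlarged by a vertex with both
in- and out-neighbours in `T`, or there is an arc `b → a` with `a → T → b`. -/
lemma StrongOn.exists_grow {D : V → V → Prop} {S T : Finset V} (hS : StrongOn D S)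
    (hD : TournOn D S) (hTS : T ⊂ S) (hT : T.Nonempty) :
    (∃ v ∈ S, v ∉ T ∧ ∃ a ∈ T, ∃ b ∈ T, D v a ∧ D b v) ∨
    ∃ a ∈ S, ∃ b ∈ S, a ∉ T ∧ b ∉ T ∧ a ≠ b ∧ (∀ t ∈ T, D a t) ∧ (∀ t ∈ T, D t b) ∧ D b a := by
  by_contra! hcon
  obtain ⟨h1, h2⟩ := hcon
  obtain ⟨x, hxS, hxT⟩ := Finset.exists_of_ssubset hTS
  obtain ⟨t, ht⟩ := hT
  have hsub := hTS.1
  -- every outside vertex either dominates `T` or is dominated by it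
  have hdom : ∀ v ∈ S, v ∉ T → ∀ s ∈ T, D s v → ∀ s' ∈ T, D s' v := by
    intro v hv hvT s hs hsv s' hs'
    by_contra hn
    exact h1 v hv hvT s' hs' s hs ((hD v hv s' (hsub hs') (by rintro rfl; exact hvT hs')).2 hn) hsv
  have hdom' : ∀ v ∈ S, v ∉ T → ¬ D t v → ∀ s ∈ T, D v s := by
    intro v hv hvT htv s hs
    refine (hD v hv s (hsub hs) (by rintro rfl; exact hvT hs)).2 fun hn => htv ?_
    exact hdom v hv hvT s hs hn t ht
  by_cases hB : ∃ b ∈ S, b ∉ T ∧ D t b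
  · obtain ⟨b, hb, hbT, htb⟩ := hB
    have := hS (fun v => v ∉ T ∧ D t v) ?_ b hb ⟨hbT, htb⟩ t (hsub ht)
    · exact this.1 ht
    · rintro u hu w hw ⟨huT, htu⟩ huw
      have huT' := hdom u hu huT t ht htu
      have hwT : w ∉ T := fun h =>
        (hD u hu w hw (by rintro rfl; exact huT h)).1 huw (huT' w h)
      refine ⟨hwT, ?_⟩
      by_contra hn
      refine h2 w hw u hu hwT huT ?_ (hdom' w hw hwT hn) huT' huw
      rintro rfl; exact hn htu
  · push Not at hB
    refine hxT (hS (· ∈ T) ?_ t (hsub ht) ht x hxS)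
    intro u hu w hw huT huw
    by_contra hwT
    exact hB w hw hwT (hdom w hw hwT u huT huw t ht)

/-- A strong tournament contains strong subtournaments of all sizes from `3` on. -/
lemma StrongOn.exists_subset_card {D : V → V → Prop} {S : Finset V} (hS : StrongOn D S)
    (hD : TournOn D S) {j : ℕ} (hj : 3 ≤ j) (hjS : j ≤ S.card) :
    ∃ T ⊆ S, T.card = j ∧ StrongOn D T := by
  induction j, hj using Nat.le_induction with
  | base =>
    obtain ⟨v, hv⟩ : S.Nonempty := Finset.card_pos.1 (by omega)
    have hss : {v} ⊂ S := by
      refine (Finset.ssubset_iff_subset_ne).2 ⟨by simpa using hv, ?_⟩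
      rintro rfl; simp at hjS
    rcases hS.exists_grow hD hss (by simp) with
      ⟨w, hw, hwv, a, ha, b, hb, hwa, hbw⟩ | ⟨a, ha, b, hb, hav, hbv, hab, h1, h2, h3⟩
    · simp only [Finset.mem_singleton] at ha hb hwv
      subst ha hb
      exact absurd hbw ((hD w hw _ hv hwv).1 hwa)
    · refine ⟨insert a (insert b {v}), ?_, ?_, strongOn_insert_insert (by simp) h1 h2 h3⟩
      · simp [Finset.insert_subset_iff, ha, hb, hv]
      · rw [Finset.card_insert_of_notMem, Finset.card_insert_of_notMem hbv, Finset.card_singleton]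
        simp at hav ⊢; exact ⟨hab, hav⟩
  | succ j hj ih =>
    obtain ⟨T, hTS, hTj, hT⟩ := ih (by omega)
    have hss : T ⊂ S := (Finset.ssubset_iff_subset_ne).2 ⟨hTS, by rintro rfl; omega⟩
    have hTne : T.Nonempty := Finset.card_pos.1 (by omega)
    rcases hS.exists_grow hD hss hTne with
      ⟨w, hw, hwT, a, ha, b, hb, hwa, hbw⟩ | ⟨a, ha, b, hb, haT, hbT, hab, h1, h2, h3⟩
    · exact ⟨insert w T, Finset.insert_subset hw hTS,
        by rw [Finset.card_insert_of_notMem hwT, hTj], hT.insert_vertex ha hb hwa hbw⟩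
    · obtain ⟨t, ht⟩ := hTne
      refine ⟨insert a (insert b (T.erase t)), ?_, ?_, strongOn_insert_insert ?_
        (fun s hs => h1 s (Finset.mem_of_mem_erase hs))
        (fun s hs => h2 s (Finset.mem_of_mem_erase hs)) h3⟩
      · exact Finset.insert_subset ha (Finset.insert_subset hb
          ((Finset.erase_subset _ _).trans hTS))
      · rw [Finset.card_insert_of_notMem, Finset.card_insert_of_notMem, Finset.card_erase_of_mem ht]
        · omega
        · simp [hbT]
        · simp [haT, hab]
      · exact Finset.card_pos.1 (by rw [Finset.card_erase_of_mem ht]; omega)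

/-- Every tournament has a Hamiltonian path, here listed from its end. -/
lemma TournOn.exists_chain {D : V → V → Prop} {A : Finset V} (hA : TournOn D A) :
    ∃ l : List V, l.Nodup ∧ l.toFinset = A ∧ l.IsChain (fun a b => D b a) := by
  have ins : ∀ (y : V) (l : List V), (∀ a ∈ l, D y a ∨ D a y) → l.IsChain (fun a b => D b a) →
      ∃ l' : List V, l'.Perm (y :: l) ∧ l'.IsChain (fun a b => D b a) ∧
        ∀ c, (c :: l).IsChain (fun a b => D b a) → D y c → (c :: l').IsChain (fun a b => D b a) := by
    intro y l
    induction l with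
    | nil => exact fun _ _ => ⟨[y], .refl _, by simp, by simp⟩
    | cons a t ih =>
      intro htot hch
      by_cases hya : D a y
      · exact ⟨y :: a :: t, .refl _, by simp [List.isChain_cons_cons, hya, hch],
          fun c _ hcy => by simp [List.isChain_cons_cons, hya, hch, hcy]⟩
      · have hay : D y a := (htot a (by simp)).resolve_right hya
        obtain ⟨t', hperm, -, hc⟩ := ih (fun b hb => htot b (by simp [hb])) hch.tail
        refine ⟨a :: t', (hperm.cons a).trans (.swap _ _ _), hc a hch hay, fun c hca _ => ?_⟩
        rw [List.isChain_cons_cons] at hca ⊢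
        exact ⟨hca.1, hc a hch hay⟩
  induction A using Finset.induction_on with
  | empty => exact ⟨[], by simp⟩
  | insert y A hy ih =>
    obtain ⟨l, hnd, rfl, hch⟩ := ih (hA.mono (Finset.subset_insert _ _))
    have htot : ∀ a ∈ l, D y a ∨ D a y := fun a ha => by
      have := hA y (by simp) a (by simp [ha]) (by rintro rfl; simp [ha] at hy)
      tauto
    obtain ⟨l', hperm, hch', -⟩ := ins y l htot hch
    refine ⟨l', ?_, ?_, hch'⟩
    · rw [hperm.nodup_iff, List.nodup_cons]
      exact ⟨by simpa using hy, hnd⟩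
    · rw [List.toFinset_eq_of_perm _ _ hperm, List.toFinset_cons]

lemma StrongOn.insert_source {E : V → V → Prop} {C : Finset V} {y s b : V}
    (hC : StrongOn E C) (hs : ∀ c ∈ C, E s c) (hys : E y s) (hb : b ∈ C) (hby : E b y)
    (hyC : ∀ c ∈ C, E y c ∨ E c y) : StrongOn E (insert s (insert y C)) := by
  by_cases h : ∃ c ∈ C, E y c
  · obtain ⟨c, hc, hyc⟩ := h
    exact (hC.insert_vertex hc hb hyc hby).insert_vertex (Finset.mem_insert_of_mem hb)
      (Finset.mem_insert_self y C) (hs b hb) hys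
  · push Not at h
    exact strongOn_insert_insert ⟨b, hb⟩ hs (fun c hc => (hyC c hc).resolve_left (h c hc)) hys

lemma StrongOn.insert_sink {E : V → V → Prop} {C : Finset V} {y s b : V}
    (hC : StrongOn E C) (hs : ∀ c ∈ C, E c s) (hsy : E s y) (hb : b ∈ C) (hyb : E y b)
    (hyC : ∀ c ∈ C, E y c ∨ E c y) : StrongOn E (insert s (insert y C)) := by
  by_cases h : ∃ c ∈ C, E c y
  · obtain ⟨c, hc, hcy⟩ := h
    exact (hC.insert_vertex hb hc hyb hcy).insert_vertex (Finset.mem_insert_self y C)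
      (Finset.mem_insert_of_mem hb) hsy (hs b hb)
  · push Not at h
    rw [Finset.insert_comm]
    exact strongOn_insert_insert ⟨b, hb⟩ (fun c hc => (hyC c hc).resolve_right (h c hc)) hs hsy

lemma exists_insert_of_isClique {G : SimpleGraph V} {A : Finset V} {n : ℕ}
    (hA : A.card = n + 1) (hcl : G.IsClique (A : Set V)) :
    ∃ y B, insert y B = A ∧ B.card = n ∧ y ∉ B ∧ G.IsClique (B : Set V) ∧ ∀ x ∈ B, G.Adj y x := by
  obtain ⟨y, B, hyB, rfl, hB⟩ := Finset.card_eq_succ.1 hA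
  rw [Finset.coe_insert] at hcl
  refine ⟨y, B, rfl, hB, hyB, hcl.subset (by simp), fun x hx => ?_⟩
  exact hcl (by simp) (by simp [hx]) (by rintro rfl; exact hyB hx)

end

/-- `D` is an orientation of the subgraph of `G` induced by `A`. -/
structure OrientsOn (G : SimpleGraph V) (A : Finset V) (D : V → V → Prop) : Prop where
  adj : ∀ u v, D u v → G.Adj u v ∧ u ∈ A ∧ v ∈ A
  iff_not : ∀ u ∈ A, ∀ v ∈ A, G.Adj u v → (D u v ↔ ¬ D v u)

lemma OrientsOn.tournOn {G : SimpleGraph V} {A : Finset V} {D : V → V → Prop} (h : OrientsOn G A D)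
    {S : Finset V} (hSA : S ⊆ A) (hS : G.IsClique S) :
    TournOn D S := fun u hu v hv huv => h.iff_not u (hSA hu) v (hSA hv) (hS hu hv huv)

/-- The restriction of `D` to `A`. -/
def restrictOn (D : V → V → Prop) (A : Finset V) : V → V → Prop := fun u v => D u v ∧ u ∈ A ∧ v ∈ A

lemma agreeOn_restrictOn (D : V → V → Prop) (A : Finset V) : AgreeOn (restrictOn D A) D A :=
  fun u hu v hv => by simp [restrictOn, hu, hv]

section
variable [Fintype V] [DecidableEq V]

/-- The orientations of `G[A]` without a strongly connected `k`-clique. -/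
def freeOn (G : SimpleGraph V) (k : ℕ) (A : Finset V) : Finset (V → V → Prop) :=
  {D | OrientsOn G A D ∧ ∀ S ⊆ A, G.IsClique S → S.card = k → ¬ StrongOn D S}

/-- The possible out-neighbourhoods of `y` in `A` in the free orientations of `G[A ∪ {y}]`
extending the orientation `D` of `G[A]`. -/
def extOn (G : SimpleGraph V) (k : ℕ) (A : Finset V) (y : V) (D : V → V → Prop) :
    Finset (Finset V) :=
  {P | ∃ E ∈ freeOn G k (insert y A), AgreeOn E D A ∧ A.filter (E y) = P}

variable {G : SimpleGraph V} {k : ℕ} {A B : Finset V} {y : V} {D : V → V → Prop}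

lemma mem_freeOn : D ∈ freeOn G k A ↔
    OrientsOn G A D ∧ ∀ S ⊆ A, G.IsClique S → S.card = k → ¬ StrongOn D S := by
  simp [freeOn]

lemma mem_extOn {P : Finset V} : P ∈ extOn G k A y D ↔
    ∃ E ∈ freeOn G k (insert y A), AgreeOn E D A ∧ A.filter (E y) = P := by
  simp [extOn]

/-- A free orientation has no strong clique with `k` or more vertices. -/
lemma not_strongOn_of_mem_freeOn (hk : 3 ≤ k) (hD : D ∈ freeOn G k A) {S : Finset V}
    (hSA : S ⊆ A) (hS : G.IsClique S) (hSk : k ≤ S.card) : ¬ StrongOn D S := by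
  intro hst
  rw [mem_freeOn] at hD
  obtain ⟨T, hTS, hTk, hT⟩ := hst.exists_subset_card (hD.1.tournOn hSA hS) hk hSk
  exact hD.2 T (hTS.trans hSA) (hS.subset (by simpa using hTS)) hTk hT

lemma restrictOn_mem_freeOn (hD : D ∈ freeOn G k B) (hAB : A ⊆ B) :
    restrictOn D A ∈ freeOn G k A := by
  rw [mem_freeOn] at hD ⊢
  refine ⟨⟨fun u v h => ⟨(hD.1.adj u v h.1).1, h.2⟩, fun u hu v hv huv => ?_⟩, ?_⟩
  · simpa [restrictOn, hu, hv] using hD.1.iff_not u (hAB hu) v (hAB hv) huv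
  · intro S hS hc hk hst
    exact hD.2 S (hS.trans hAB) hc hk (hst.congr ((agreeOn_restrictOn D A).mono hS))

/-- Splitting a free orientation of `G[A ∪ B]` into its restrictions to `A` and `B` and the
arcs between `B \ A` and `A \ B`. -/
lemma card_freeOn_union_le (G : SimpleGraph V) (k : ℕ) (A B : Finset V) :
    (freeOn G k (A ∪ B)).card ≤
      ∑ D ∈ freeOn G k A, (freeOn G k B).card * ∏ y ∈ B \ A, (extOn G k (A \ B) y D).card := by
  calc (freeOn G k (A ∪ B)).card
      ≤ ((freeOn G k A).sigma fun D =>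
          freeOn G k B ×ˢ (B \ A).pi fun y => extOn G k (A \ B) y D).card := by
        refine Finset.card_le_card_of_injOn
          (fun D => ⟨restrictOn D A, restrictOn D B, fun y _ => (A \ B).filter (D y)⟩) ?_ ?_
        · intro D hD
          have hD' : D ∈ freeOn G k (A ∪ B) := hD
          simp only [Finset.coe_sigma, Set.mem_sigma_iff, Finset.mem_coe, Finset.mem_product,
            Finset.mem_pi]
          refine ⟨restrictOn_mem_freeOn hD' Finset.subset_union_left,
            restrictOn_mem_freeOn hD' Finset.subset_union_right, fun y hy => ?_⟩
          rw [Finset.mem_sdiff] at hy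
          have hsub : insert y (A \ B) ⊆ A ∪ B := by
            intro x hx
            simp only [Finset.mem_insert, Finset.mem_sdiff, Finset.mem_union] at hx ⊢
            rcases hx with rfl | hx
            · exact Or.inr hy.1
            · exact Or.inl hx.1
          refine mem_extOn.2 ⟨restrictOn D (insert y (A \ B)), restrictOn_mem_freeOn hD' hsub, ?_, ?_⟩
          · intro u hu v hv
            simp only [Finset.mem_sdiff] at hu hv
            simp [restrictOn, hu, hv]
          · ext x
            simp +contextual [restrictOn]
        · intro D hD E hE h
          have hD' : D ∈ freeOn G k (A ∪ B) := hD
          have hE' : E ∈ freeOn G k (A ∪ B) := hE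
          rw [mem_freeOn] at hD' hE'
          simp only [Sigma.mk.injEq, heq_eq_eq, Prod.mk.injEq] at h
          obtain ⟨hA, hB, hP⟩ := h
          have eA : ∀ u ∈ A, ∀ v ∈ A, (D u v ↔ E u v) := fun u hu v hv => by
            simpa [restrictOn, hu, hv] using congrFun (congrFun hA u) v
          have eB : ∀ u ∈ B, ∀ v ∈ B, (D u v ↔ E u v) := fun u hu v hv => by
            simpa [restrictOn, hu, hv] using congrFun (congrFun hB u) v
          have eP : ∀ u ∈ B \ A, ∀ v ∈ A \ B, (D u v ↔ E u v) := fun u hu v hv => by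
            have h1 := congrFun (congrFun hP u) hu
            have h2 := Finset.ext_iff.1 h1 v
            rw [Finset.mem_filter, Finset.mem_filter] at h2
            simpa only [hv, true_and] using h2
          have key : ∀ u ∈ A ∪ B, ∀ v ∈ A ∪ B, G.Adj u v → (D u v ↔ E u v) := by
            intro u hu v hv huv
            have i1 := hD'.1.iff_not u hu v hv huv
            have i2 := hE'.1.iff_not u hu v hv huv
            rw [Finset.mem_union] at hu hv
            by_cases hA : u ∈ A ∧ v ∈ A
            · exact eA u hA.1 v hA.2
            by_cases hB : u ∈ B ∧ v ∈ B
            · exact eB u hB.1 v hB.2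
            by_cases huA : u ∈ A
            · have := eP v (by rw [Finset.mem_sdiff]; tauto) u (by rw [Finset.mem_sdiff]; tauto)
              tauto
            · exact eP u (by rw [Finset.mem_sdiff]; tauto) v (by rw [Finset.mem_sdiff]; tauto)
          funext u v
          refine propext ⟨fun h => ?_, fun h => ?_⟩
          · obtain ⟨h1, h2, h3⟩ := hD'.1.adj u v h
            exact (key u h2 v h3 h1).1 h
          · obtain ⟨h1, h2, h3⟩ := hE'.1.adj u v h
            exact (key u h2 v h3 h1).2 h
    _ = _ := by simp [Finset.card_sigma, Finset.card_product, Finset.card_pi]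

lemma card_freeOn_le_one (hA : ∀ u ∈ A, ∀ v ∈ A, ¬ G.Adj u v) : (freeOn G k A).card ≤ 1 := by
  rw [Finset.card_le_one]
  have : ∀ D ∈ freeOn G k A, D = fun _ _ => False := by
    intro D hD
    rw [mem_freeOn] at hD
    funext u v
    refine eq_false fun h => ?_
    obtain ⟨h1, h2, h3⟩ := hD.1.adj u v h
    exact hA u h2 v h3 h1
  intro D hD E hE
  rw [this D hD, this E hE]

lemma card_freeOn_insert_le (hy : y ∉ A) :
    (freeOn G k (insert y A)).card ≤ ∑ D ∈ freeOn G k A, (extOn G k A y D).card := by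
  have h := card_freeOn_union_le G k A {y}
  rw [Finset.union_comm, ← Finset.insert_eq] at h
  refine h.trans (Finset.sum_le_sum fun D _ => ?_)
  have e1 : ({y} : Finset V) \ A = {y} := by simp [hy]
  have e2 : A \ {y} = A := by simp [hy]
  rw [e1, e2, Finset.prod_singleton]
  have := card_freeOn_le_one (G := G) (k := k) (A := {y}) (by simp)
  nlinarith

lemma card_freeOn_union_le_mul {h : ℕ}
    (hh : ∀ D ∈ freeOn G k A, ∀ y ∈ B \ A, (extOn G k (A \ B) y D).card ≤ h) :
    (freeOn G k (A ∪ B)).card ≤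
      (freeOn G k A).card * ((freeOn G k B).card * h ^ (B \ A).card) := by
  refine (card_freeOn_union_le G k A B).trans ?_
  rw [← smul_eq_mul, ← Finset.sum_const]
  refine Finset.sum_le_sum fun D hD => Nat.mul_le_mul_left _ ?_
  exact Finset.prod_le_pow_card _ _ _ (hh D hD)

lemma card_freeOn_insert_le_mul {h : ℕ} (hy : y ∉ A)
    (hh : ∀ D ∈ freeOn G k A, (extOn G k A y D).card ≤ h) :
    (freeOn G k (insert y A)).card ≤ (freeOn G k A).card * h := by
  refine (card_freeOn_insert_le hy).trans ?_
  rw [← smul_eq_mul, ← Finset.sum_const]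
  exact Finset.sum_le_sum hh

lemma exists_of_mem_extOn {P : Finset V} (hP : P ∈ extOn G k A y D) :
    ∃ E ∈ freeOn G k (insert y A), AgreeOn E D A ∧ P ⊆ A.filter (G.Adj y) ∧
      (∀ x ∈ A, (E y x ↔ x ∈ P)) ∧ ∀ x ∈ A, G.Adj y x → (E x y ↔ x ∉ P) := by
  obtain ⟨E, hE, hED, rfl⟩ := mem_extOn.1 hP
  have hO := (mem_freeOn.1 hE).1
  refine ⟨E, hE, hED, ?_, by simp +contextual, fun x hx hadj => ?_⟩
  · intro x hx
    rw [Finset.mem_filter] at hx ⊢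
    exact ⟨hx.1, (hO.adj y x hx.2).1⟩
  · rw [Finset.mem_filter, hO.iff_not x (by simp [hx]) y (by simp) hadj.symm]
    simp [hx]

lemma card_extOn_le_two_pow : (extOn G k A y D).card ≤ 2 ^ (A.filter (G.Adj y)).card := by
  rw [← Finset.card_powerset]
  refine Finset.card_le_card fun P hP => ?_
  obtain ⟨E, -, -, h, -⟩ := exists_of_mem_extOn hP
  exact Finset.mem_powerset.2 h

lemma extOn_subset_extOn_filter : extOn G k A y D ⊆ extOn G k (A.filter (G.Adj y)) y D := by
  intro P hP
  obtain ⟨E, hE, hED, rfl⟩ := mem_extOn.1 hP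
  have hO := (mem_freeOn.1 hE).1
  have hsub : insert y (A.filter (G.Adj y)) ⊆ insert y A :=
    Finset.insert_subset_insert _ (Finset.filter_subset _ _)
  refine mem_extOn.2 ⟨_, restrictOn_mem_freeOn hE hsub, ?_, ?_⟩
  · intro u hu v hv
    rw [agreeOn_restrictOn E _ u (Finset.mem_insert_of_mem hu) v (Finset.mem_insert_of_mem hv)]
    exact hED u (Finset.mem_filter.1 hu).1 v (Finset.mem_filter.1 hv).1
  · ext x
    simp only [Finset.mem_filter, restrictOn, Finset.mem_insert]
    constructor
    · rintro ⟨⟨hx, _⟩, h, _⟩; exact ⟨hx, h⟩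
    · rintro ⟨hx, h⟩
      have := (hO.adj y x h).1
      exact ⟨⟨hx, this⟩, h, Or.inl trivial, Or.inr ⟨hx, this⟩⟩

lemma card_extOn_chain_le (hk : 3 ≤ k) (l : List V) (hnd : l.Nodup)
    (hch : l.IsChain (fun a b => D b a)) (hcl : G.IsClique (l.toFinset : Set V))
    (hy : ∀ x ∈ l, G.Adj y x) (hlen : k ≤ l.length + 2) :
    (extOn G k l.toFinset y D).card ≤ (l.length + 4 - k) * 2 ^ (k - 3) := by
  induction l with
  | nil => simp at hlen; omega
  | cons x l ih =>
    rcases hlen.eq_or_lt with heq | hlt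
    · calc _ ≤ 2 ^ ((x :: l).toFinset.filter (G.Adj y)).card := card_extOn_le_two_pow
        _ ≤ 2 ^ (x :: l).length := Nat.pow_le_pow_right (by norm_num)
            ((Finset.card_filter_le _ _).trans (List.toFinset_card_le _))
        _ = ((x :: l).length + 4 - k) * 2 ^ (k - 3) := by
            rw [show (x :: l).length = k - 3 + 1 by omega, pow_succ,
              show k - 3 + 1 + 4 - k = 2 by omega, mul_comm]
    have hyl : y ∉ x :: l := fun h => G.irrefl (hy y h)
    have hlc : (x :: l).length = l.length + 1 := rfl
    have hxl : x ∉ l := (List.nodup_cons.1 hnd).1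
    have hmem : ∀ z, z ∈ (x :: l).toFinset ↔ z = x ∨ z ∈ l := by simp
    have hsub : l.toFinset ⊆ (x :: l).toFinset := fun z hz => by simp at hz ⊢; exact Or.inr hz
    have h1 : ((extOn G k (x :: l).toFinset y D).filter (x ∈ ·)).card ≤
        (extOn G k l.toFinset y D).card := by
      refine Finset.card_le_card_of_injOn (fun P => P.erase x) ?_ ?_
      · intro P hP
        obtain ⟨hP, -⟩ := Finset.mem_filter.1 hP
        obtain ⟨E, hE, hED, rfl⟩ := mem_extOn.1 hP
        refine mem_extOn.2 ⟨_, restrictOn_mem_freeOn hE (Finset.insert_subset_insert y hsub), ?_, ?_⟩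
        · intro u hu v hv
          rw [agreeOn_restrictOn E _ u (Finset.mem_insert_of_mem hu) v (Finset.mem_insert_of_mem hv)]
          exact hED u (hsub hu) v (hsub hv)
        · ext z
          simp only [Finset.mem_filter, restrictOn, Finset.mem_insert, Finset.mem_erase, hmem,
            List.mem_toFinset]
          constructor
          · rintro ⟨hz, h, -⟩
            exact ⟨by rintro rfl; exact hxl hz, Or.inr hz, h⟩
          · rintro ⟨hzx, hz, h⟩
            have hz := hz.resolve_left hzx
            exact ⟨hz, h, Or.inl trivial, Or.inr hz⟩
      · intro P hP Q hQ hPQ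
        rw [← Finset.insert_erase (Finset.mem_filter.1 hP).2,
          ← Finset.insert_erase (Finset.mem_filter.1 hQ).2]
        exact congrArg (insert x) hPQ
    have h2 : ((extOn G k (x :: l).toFinset y D).filter (x ∉ ·)).card ≤ 2 ^ (k - 3) := by
      calc _ ≤ ((l.take (k - 3)).toFinset.powerset).card := Finset.card_le_card ?_
        _ ≤ _ := by
          rw [Finset.card_powerset]
          exact Nat.pow_le_pow_right (by norm_num)
            ((List.toFinset_card_le _).trans (by simp))
      intro P hP
      obtain ⟨hP, hxP⟩ := Finset.mem_filter.1 hP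
      obtain ⟨E, hE, hED, hPA, hout, hin⟩ := exists_of_mem_extOn hP
      refine Finset.mem_powerset.2 fun z hz => ?_
      have hzA := (Finset.mem_filter.1 (hPA hz)).1
      have hzl : z ∈ l := ((hmem z).1 hzA).resolve_left (by rintro rfl; exact hxP hz)
      obtain ⟨s, t, rfl⟩ := List.append_of_mem hzl
      by_contra hn
      have hs : k - 3 ≤ s.length := by
        by_contra! hlt
        apply hn
        rw [List.mem_toFinset, List.take_append, List.mem_append]
        right
        obtain ⟨c, hc⟩ : ∃ c, k - 3 - s.length = c + 1 := ⟨k - 3 - s.length - 1, by omega⟩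
        simp [hc]
      have hpre : x :: (s ++ [z]) <+: x :: (s ++ z :: t) := ⟨t, by simp⟩
      have hchE : (x :: (s ++ z :: t)).IsChain (fun a b => E b a) :=
        hch.imp_of_mem_imp fun a b ha hb hab =>
          (hED b (List.mem_toFinset.2 hb) a (List.mem_toFinset.2 ha)).2 hab
      have hst := strongOn_insert_chain (y := y) (hchE.prefix hpre) (z := z)
        (List.getLast?_concat (l := x :: s)) ((hout z hzA).2 hz) ((hin x (by simp) (hy x (by simp))).2 hxP)
      have hpsub : (x :: (s ++ [z])).toFinset ⊆ (x :: (s ++ z :: t)).toFinset := fun w hw =>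
        List.mem_toFinset.2 (hpre.subset (List.mem_toFinset.1 hw))
      refine not_strongOn_of_mem_freeOn hk hE (Finset.insert_subset_insert y hpsub) ?_ ?_ hst
      · rw [Finset.coe_insert]
        refine (hcl.subset (by exact_mod_cast hpsub)).insert fun w hw _ => ?_
        exact hy w (List.mem_toFinset.1 (hpsub (by exact_mod_cast hw)))
      · rw [Finset.card_insert_of_notMem, List.toFinset_card_of_nodup (hnd.sublist hpre.sublist)]
        · simp; omega
        · exact fun h => hyl (List.mem_toFinset.1 (hpsub h))
    have h3 := ih (List.nodup_cons.1 hnd).2 hch.tail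
      (hcl.subset (by exact_mod_cast hsub)) (fun z hz => hy z (by simp [hz])) (by omega)
    rw [← Finset.card_filter_add_card_filter_not (x ∈ ·)]
    calc _ ≤ (l.length + 4 - k) * 2 ^ (k - 3) + 2 ^ (k - 3) := add_le_add (h1.trans h3) h2
      _ = _ := by rw [show (x :: l).length + 4 - k = l.length + 4 - k + 1 by omega]; ring

/-- The number of ways to attach a vertex to a clique. -/
lemma card_extOn_clique_le (hk : 3 ≤ k) (hcl : G.IsClique (A : Set V)) (hy : ∀ x ∈ A, G.Adj y x)
    (hA : k ≤ A.card + 2) (hD : TournOn D A) :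
    (extOn G k A y D).card ≤ (A.card + 4 - k) * 2 ^ (k - 3) := by
  obtain ⟨l, hnd, rfl, hch⟩ := hD.exists_chain
  have := card_extOn_chain_le hk l hnd hch hcl (fun x hx => hy x (by simpa using hx))
    (by rwa [List.toFinset_card_of_nodup hnd] at hA)
  rwa [List.toFinset_card_of_nodup hnd]

/-- The number of ways to attach a vertex that is not complete to a given clique. -/
lemma card_extOn_le (hk : 3 ≤ k) (hcl : G.IsClique (A : Set V)) (hy : ∃ x ∈ A, ¬ G.Adj y x)
    (hA : k ≤ A.card + 1) (hD : TournOn D A) :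
    (extOn G k A y D).card ≤ (A.card + 3 - k) * 2 ^ (k - 3) := by
  set A' := A.filter (G.Adj y) with hA'
  have hlt : A'.card < A.card := by
    apply Finset.card_lt_card
    rw [Finset.filter_ssubset]
    exact hy
  rcases lt_or_ge (A'.card + 2) k with h | h
  · calc _ ≤ 2 ^ A'.card := card_extOn_le_two_pow
      _ ≤ 2 ^ (k - 3 + 1) := Nat.pow_le_pow_right (by norm_num) (by omega)
      _ = 2 * 2 ^ (k - 3) := by ring
      _ ≤ _ := Nat.mul_le_mul_right _ (by omega)
  · have hsub : A' ⊆ A := Finset.filter_subset _ _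
    calc _ ≤ (extOn G k A' y D).card := Finset.card_le_card extOn_subset_extOn_filter
      _ ≤ (A'.card + 4 - k) * 2 ^ (k - 3) :=
          card_extOn_clique_le hk (hcl.subset (by exact_mod_cast hsub))
            (fun x hx => (Finset.mem_filter.1 hx).2) h (hD.mono hsub)
      _ ≤ _ := Nat.mul_le_mul_right _ (by omega)

lemma card_freeOn_clique_le_two_pow (hcl : G.IsClique (A : Set V)) :
    (freeOn G k A).card ≤ 2 ^ A.card.choose 2 := by
  induction A using Finset.induction_on with
  | empty => simpa using card_freeOn_le_one (G := G) (k := k) (A := ∅) (by simp)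
  | insert y A hy ih =>
    have h1 := ih (hcl.subset (by simp))
    refine (card_freeOn_insert_le_mul hy (h := 2 ^ A.card) fun D _ =>
      card_extOn_le_two_pow.trans
        (Nat.pow_le_pow_right (by norm_num) (Finset.card_filter_le _ _))).trans ?_
    rw [Finset.card_insert_of_notMem hy, Nat.choose_succ_succ' A.card 1, Nat.choose_one_right,
      add_comm, pow_add]
    exact Nat.mul_le_mul_right _ h1

lemma freeOn_subset_freeOn {j : ℕ} (hj : 3 ≤ j) (hjk : j ≤ k) : freeOn G j A ⊆ freeOn G k A := by
  intro D hD
  exact mem_freeOn.2 ⟨(mem_freeOn.1 hD).1, fun S hS hc hk =>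
    not_strongOn_of_mem_freeOn hj hD hS hc (hk ▸ hjk)⟩

lemma freeOn_subset_freeOn_of_card_lt {j : ℕ} (hA : A.card < k) : freeOn G j A ⊆ freeOn G k A := by
  intro D hD
  refine mem_freeOn.2 ⟨(mem_freeOn.1 hD).1, fun S hS _ hk => ?_⟩
  have := Finset.card_le_card hS
  omega

lemma strongOn_of_notMem_freeOn {j : ℕ} (hD : D ∈ freeOn G k A) (hD' : D ∉ freeOn G j A) :
    ∃ S ⊆ A, G.IsClique (S : Set V) ∧ S.card = j ∧ StrongOn D S := by
  by_contra! h
  exact hD' (mem_freeOn.2 ⟨(mem_freeOn.1 hD).1, h⟩)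

/-- In an extension without a strong `k`-clique, a vertex complete to a strong
clique `C` with at least `k - 1` vertices dominates it or is dominated by it. -/
lemma eq_empty_or_subset_of_strongOn (hk : 3 ≤ k) {E : V → V → Prop} {C P : Finset V}
    (hE : E ∈ freeOn G k (insert y A)) (hCA : C ⊆ A) (hcl : G.IsClique (C : Set V))
    (hy : ∀ x ∈ A, G.Adj y x) (hC : k ≤ C.card + 1) (hst : StrongOn E C)
    (hout : ∀ x ∈ A, (E y x ↔ x ∈ P)) (hin : ∀ x ∈ A, G.Adj y x → (E x y ↔ x ∉ P)) :
    (∀ c ∈ C, c ∉ P) ∨ C ⊆ P := by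
  by_contra! h
  obtain ⟨⟨c, hc, hcP⟩, h2⟩ := h
  obtain ⟨b, hb, hbP⟩ := Finset.not_subset.1 h2
  refine not_strongOn_of_mem_freeOn hk hE (Finset.insert_subset_insert y hCA) ?_ ?_
    (hst.insert_vertex hc hb ((hout c (hCA hc)).2 hcP) ((hin b (hCA hb) (hy b (hCA hb))).2 hbP))
  · rw [Finset.coe_insert]
    exact hcl.insert fun w hw _ => hy w (hCA hw)
  · rw [Finset.card_insert_of_notMem]
    · exact hC
    · exact fun h => G.irrefl (hy y (hCA h))

lemma card_extOn_strong_le (hk : 3 ≤ k) (hcl : G.IsClique (A : Set V)) (hy : ∀ x ∈ A, G.Adj y x)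
    (hA : k ≤ A.card + 1) (hD : StrongOn D A) : (extOn G k A y D).card ≤ 2 := by
  calc _ ≤ ({∅, A} : Finset (Finset V)).card := Finset.card_le_card fun P hP => ?_
    _ ≤ 2 := Finset.card_le_two
  obtain ⟨E, hE, hED, hPA, hout, hin⟩ := exists_of_mem_extOn hP
  have hsubset : P ⊆ A := hPA.trans (Finset.filter_subset _ _)
  simp only [Finset.mem_insert, Finset.mem_singleton]
  rcases eq_empty_or_subset_of_strongOn hk hE subset_rfl hcl hy hA (hD.congr hED.symm) hout hin
    with h | h
  · exact Or.inl (Finset.eq_empty_of_forall_notMem fun x hx => h x (hsubset hx) hx)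
  · exact Or.inr (hsubset.antisymm h)

/-- Counting non-strong tournaments: removing a vertex. -/
lemma card_freeOn_insert_clique_le (hk : 2 ≤ k) (hAk : A.card = k) (hcl : G.IsClique (A : Set V))
    (hy : ∀ x ∈ A, G.Adj y x) :
    (freeOn G (k + 1) (insert y A)).card + 2 * (freeOn G k A).card ≤
      2 * 2 ^ k.choose 2 + 3 * 2 ^ (k - 2) * (freeOn G k A).card := by
  have hyA : y ∉ A := fun h => G.irrefl (hy y h)
  have hsub : freeOn G k A ⊆ freeOn G (k + 1) A := freeOn_subset_freeOn_of_card_lt (by omega)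
  have h1 := card_freeOn_insert_le (G := G) (k := k + 1) hyA
  rw [← Finset.sum_sdiff hsub] at h1
  have h2 : ∑ D ∈ freeOn G (k + 1) A \ freeOn G k A, (extOn G (k + 1) A y D).card ≤
      (freeOn G (k + 1) A \ freeOn G k A).card * 2 := by
    refine Finset.sum_le_card_nsmul _ _ _ fun D hD => ?_
    obtain ⟨hD, hD'⟩ := Finset.mem_sdiff.1 hD
    obtain ⟨S, hSA, -, hSk, hS⟩ := strongOn_of_notMem_freeOn hD hD'
    obtain rfl := Finset.eq_of_subset_of_card_le hSA (by omega)
    exact card_extOn_strong_le (by omega) hcl hy (by omega) hS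
  have h3 : ∑ D ∈ freeOn G k A, (extOn G (k + 1) A y D).card ≤
      (freeOn G k A).card * (3 * 2 ^ (k - 2)) := by
    refine Finset.sum_le_card_nsmul _ _ _ fun D hD => ?_
    have := card_extOn_clique_le (k := k + 1) (by omega) hcl hy (by omega)
      ((mem_freeOn.1 hD).1.tournOn subset_rfl hcl)
    rwa [show A.card + 4 - (k + 1) = 3 by omega, show k + 1 - 3 = k - 2 by omega] at this
  have h4 := Finset.card_sdiff_add_card_eq_card hsub
  have h5 := card_freeOn_clique_le_two_pow (k := k + 1) hcl
  rw [hAk] at h5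
  nlinarith

lemma card_freeOn_three_three_le (hA : A.card = 3) (hcl : G.IsClique (A : Set V)) :
    (freeOn G 3 A).card ≤ 6 := by
  obtain ⟨y, B, rfl, hB, hyB, hclB, hy⟩ := exists_insert_of_isClique hA hcl
  have h1 := card_freeOn_insert_clique_le le_rfl hB hclB hy
  have h2 := card_freeOn_clique_le_two_pow (k := 2) hclB
  rw [hB] at h2
  norm_num at h1 h2
  omega

lemma card_freeOn_four_four_le (hA : A.card = 4) (hcl : G.IsClique (A : Set V)) :
    (freeOn G 4 A).card ≤ 40 := by
  obtain ⟨y, B, rfl, hB, hyB, hclB, hy⟩ := exists_insert_of_isClique hA hcl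
  have h1 := card_freeOn_insert_clique_le (by norm_num) hB hclB hy
  have h2 := card_freeOn_three_three_le hB hclB
  norm_num [Nat.choose] at h1
  omega

lemma card_freeOn_three_four_le (hA : A.card = 4) (hcl : G.IsClique (A : Set V)) :
    (freeOn G 3 A).card ≤ 24 := by
  obtain ⟨y, B, rfl, hB, hyB, hclB, hy⟩ := exists_insert_of_isClique hA hcl
  have h2 := card_freeOn_three_three_le hB hclB
  have h1 := card_freeOn_insert_le_mul (G := G) (k := 3) hyB (h := 4) fun D hD => by
    have := card_extOn_clique_le (k := 3) le_rfl hclB hy (by omega)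
      ((mem_freeOn.1 hD).1.tournOn subset_rfl hclB)
    simpa [hB] using this
  omega

/-- A non-strong, non-transitive tournament on four vertices is a strong triangle with a source or
a sink. -/
lemma exists_source_or_sink (hA : A.card = 4) (hcl : G.IsClique (A : Set V))
    (hD : D ∈ freeOn G 4 A) (hD' : D ∉ freeOn G 3 A) :
    ∃ C s, insert s C = A ∧ s ∉ C ∧ C.card = 3 ∧ StrongOn D C ∧
      ((∀ c ∈ C, D s c) ∨ ∀ c ∈ C, D c s) := by
  obtain ⟨C, hCA, -, hC, hst⟩ := strongOn_of_notMem_freeOn hD hD'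
  obtain ⟨s, hsA, hsC⟩ := Finset.exists_mem_notMem_of_card_lt_card (s := C) (t := A) (by omega)
  have hins : insert s C = A := Finset.eq_of_subset_of_card_le (Finset.insert_subset hsA hCA)
    (by rw [Finset.card_insert_of_notMem hsC]; omega)
  refine ⟨C, s, hins, hsC, hC, hst, ?_⟩
  by_contra! h
  obtain ⟨⟨c, hc, h1⟩, b, hb, h2⟩ := h
  have ht := (mem_freeOn.1 hD).1.tournOn subset_rfl hcl
  have hne : ∀ x ∈ C, s ≠ x := by rintro x hx rfl; exact hsC hx
  have hcs : D c s := (ht c (hCA hc) s hsA (hne c hc).symm).2 h1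
  have hsb : D s b := (ht s hsA b (hCA hb) (hne b hb)).2 h2
  exact (mem_freeOn.1 hD).2 A subset_rfl hcl hA (hins ▸ hst.insert_vertex hb hc hsb hcs)

/-- Out-neighbourhoods when a vertex is attached to a strong triangle with a source or a sink. -/
lemma extOn_source_or_sink (hk : 3 ≤ k) (hk5 : k ≤ 5) (hA : A.card = 4)
    (hcl : G.IsClique (A : Set V)) (hy : ∀ x ∈ A, G.Adj y x)
    (hD : D ∈ freeOn G 4 A) (hD' : D ∉ freeOn G 3 A) :
    ∃ C s, insert s C = A ∧ s ∉ C ∧ C.card = 3 ∧ StrongOn D C ∧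
      ((∀ P ∈ extOn G k A y D, s ∈ P → C ⊆ P) ∨
        ∀ P ∈ extOn G k A y D, s ∉ P → ∀ c ∈ C, c ∉ P) := by
  obtain ⟨C, s, rfl, hs, hC, hst, hss⟩ := exists_source_or_sink hA hcl hD hD'
  refine ⟨C, s, rfl, hs, hC, hst, ?_⟩
  have hclq : G.IsClique (insert y (insert s C) : Finset V) := by
    rw [Finset.coe_insert]
    exact hcl.insert fun w hw _ => hy w (by exact_mod_cast hw)
  have hcard : k ≤ (insert y (insert s C)).card := by
    rw [Finset.card_insert_of_notMem (fun h => G.irrefl (hy y h))]; omega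
  have hsm : s ∈ insert s C := Finset.mem_insert_self _ _
  have hCm : ∀ c ∈ C, c ∈ insert s C := fun c hc => Finset.mem_insert_of_mem hc
  refine hss.imp (fun hss P hP hsP => ?_) fun hss P hP hsP b hb hbP => ?_
  · obtain ⟨E, hE, hED, hPA, hout, hin⟩ := exists_of_mem_extOn hP
    by_contra hn
    obtain ⟨b, hb, hbP⟩ := Finset.not_subset.1 hn
    refine not_strongOn_of_mem_freeOn hk hE subset_rfl hclq hcard ?_
    rw [Finset.insert_comm]
    refine (hst.congr (hED.symm.mono (Finset.subset_insert _ _))).insert_source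
      (fun c hc => (hED s hsm c (hCm c hc)).2 (hss c hc)) ((hout s hsm).2 hsP) hb
      ((hin b (hCm b hb) (hy b (hCm b hb))).2 hbP) fun c hc => ?_
    rw [hout c (hCm c hc), hin c (hCm c hc) (hy c (hCm c hc))]
    exact em _
  · obtain ⟨E, hE, hED, hPA, hout, hin⟩ := exists_of_mem_extOn hP
    refine not_strongOn_of_mem_freeOn hk hE subset_rfl hclq hcard ?_
    rw [Finset.insert_comm]
    refine (hst.congr (hED.symm.mono (Finset.subset_insert _ _))).insert_sink
      (fun c hc => (hED c (hCm c hc) s hsm).2 (hss c hc)) ((hin s hsm (hy s hsm)).2 hsP) hb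
      ((hout b (hCm b hb)).2 hbP) fun c hc => ?_
    rw [hout c (hCm c hc), hin c (hCm c hc) (hy c (hCm c hc))]
    exact em _

lemma card_extOn_five_le (hA : A.card = 4) (hcl : G.IsClique (A : Set V))
    (hy : ∀ x ∈ A, G.Adj y x) (hD : D ∈ freeOn G 4 A) (hD' : D ∉ freeOn G 3 A) :
    (extOn G 5 A y D).card ≤ 9 := by
  obtain ⟨C, s, rfl, hs, hC, -, h⟩ :=
    extOn_source_or_sink (k := 5) (by norm_num) le_rfl hA hcl hy hD hD'
  have hpow : C.powerset.card = 8 := by rw [Finset.card_powerset, hC]; norm_num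
  have hPA : ∀ P ∈ extOn G 5 (insert s C) y D, P ⊆ insert s C := fun P hP => by
    obtain ⟨E, -, -, h, -⟩ := exists_of_mem_extOn hP
    exact h.trans (Finset.filter_subset _ _)
  rcases h with h | h
  · calc _ ≤ (insert (insert s C) C.powerset).card := Finset.card_le_card fun P hP => ?_
      _ ≤ 9 := (Finset.card_insert_le _ _).trans (by omega)
    rw [Finset.mem_insert, Finset.mem_powerset]
    by_cases hsP : s ∈ P
    · exact Or.inl ((hPA P hP).antisymm (Finset.insert_subset hsP (h P hP hsP)))
    · exact Or.inr ((Finset.subset_insert_iff_of_notMem hsP).1 (hPA P hP))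
  · calc _ ≤ (insert ∅ (C.powerset.image (insert s))).card := Finset.card_le_card fun P hP => ?_
      _ ≤ 9 := (Finset.card_insert_le _ _).trans (by
          have := Finset.card_image_le (s := C.powerset) (f := insert s)
          omega)
    rw [Finset.mem_insert, Finset.mem_image]
    by_cases hsP : s ∈ P
    · refine Or.inr ⟨P.erase s, ?_, Finset.insert_erase hsP⟩
      rw [Finset.mem_powerset, ← Finset.subset_insert_iff]
      exact hPA P hP
    · refine Or.inl (Finset.eq_empty_of_forall_notMem fun x hx => ?_)
      exact h P hP hsP x ((Finset.subset_insert_iff_of_notMem hsP).1 (hPA P hP) hx) hx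

lemma card_extOn_four_le (hA : A.card = 4) (hcl : G.IsClique (A : Set V))
    (hy : ∀ x ∈ A, G.Adj y x) (hD : D ∈ freeOn G 4 A) (hD' : D ∉ freeOn G 3 A) :
    (extOn G 4 A y D).card ≤ 3 := by
  obtain ⟨C, s, rfl, hs, hC, hst, h⟩ :=
    extOn_source_or_sink (k := 4) (by norm_num) (by norm_num) hA hcl hy hD hD'
  have hP' : ∀ P ∈ extOn G 4 (insert s C) y D, P ⊆ insert s C ∧ ((∀ c ∈ C, c ∉ P) ∨ C ⊆ P) := by
    intro P hP
    obtain ⟨E, hE, hED, hPA, hout, hin⟩ := exists_of_mem_extOn hP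
    exact ⟨hPA.trans (Finset.filter_subset _ _), eq_empty_or_subset_of_strongOn (by norm_num) hE
      (Finset.subset_insert s C) (hcl.subset (by simp)) hy (by omega)
      (hst.congr (hED.symm.mono (Finset.subset_insert s C))) hout hin⟩
  obtain ⟨c, hc⟩ : C.Nonempty := Finset.card_pos.1 (by omega)
  rcases h with h | h
  · calc _ ≤ ({∅, C, insert s C} : Finset (Finset V)).card := Finset.card_le_card fun P hP => ?_
      _ ≤ 3 := Finset.card_le_three
    simp only [Finset.mem_insert, Finset.mem_singleton]
    obtain ⟨h1, h2⟩ := hP' P hP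
    by_cases hsP : s ∈ P
    · exact Or.inr (Or.inr (h1.antisymm (Finset.insert_subset hsP (h P hP hsP))))
    · have h3 := (Finset.subset_insert_iff_of_notMem hsP).1 h1
      rcases h2 with h2 | h2
      · exact Or.inl (Finset.eq_empty_of_forall_notMem fun x hx => h2 x (h3 hx) hx)
      · exact Or.inr (Or.inl (h3.antisymm h2))
  · calc _ ≤ ({∅, {s}, insert s C} : Finset (Finset V)).card := Finset.card_le_card fun P hP => ?_
      _ ≤ 3 := Finset.card_le_three
    simp only [Finset.mem_insert, Finset.mem_singleton]
    obtain ⟨h1, h2⟩ := hP' P hP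
    by_cases hsP : s ∈ P
    · rcases h2 with h2 | h2
      · refine Or.inr (Or.inl (Finset.eq_singleton_iff_unique_mem.2 ⟨hsP, fun x hx => ?_⟩))
        exact (Finset.mem_insert.1 (h1 hx)).resolve_right fun hxC => h2 x hxC hx
      · exact Or.inr (Or.inr (h1.antisymm (Finset.insert_subset hsP h2)))
    · have h3 := (Finset.subset_insert_iff_of_notMem hsP).1 h1
      exact Or.inl (Finset.eq_empty_of_forall_notMem fun x hx => h P hP hsP x (h3 hx) hx)

lemma card_freeOn_five_five_lt (hA : A.card = 5) (hcl : G.IsClique (A : Set V)) :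
    (freeOn G 5 A).card < 512 := by
  obtain ⟨y, B, rfl, hB, hyB, hclB, hy⟩ := exists_insert_of_isClique hA hcl
  have hsub : freeOn G 4 B ⊆ freeOn G 5 B := freeOn_subset_freeOn (by norm_num) (by norm_num)
  have hsub' : freeOn G 3 B ⊆ freeOn G 4 B := freeOn_subset_freeOn (by norm_num) (by norm_num)
  have h1 := card_freeOn_insert_le (G := G) (k := 5) hyB
  rw [← Finset.sum_sdiff hsub, ← Finset.sum_sdiff hsub'] at h1
  have h2 : ∑ D ∈ freeOn G 5 B \ freeOn G 4 B, (extOn G 5 B y D).card ≤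
      (freeOn G 5 B \ freeOn G 4 B).card * 2 := by
    refine Finset.sum_le_card_nsmul _ _ _ fun D hD => ?_
    obtain ⟨hD, hD'⟩ := Finset.mem_sdiff.1 hD
    obtain ⟨S, hSA, -, hSk, hS⟩ := strongOn_of_notMem_freeOn hD hD'
    obtain rfl := Finset.eq_of_subset_of_card_le hSA (by omega)
    exact card_extOn_strong_le (by omega) hclB hy (by omega) hS
  have h3 : ∑ D ∈ freeOn G 4 B \ freeOn G 3 B, (extOn G 5 B y D).card ≤
      (freeOn G 4 B \ freeOn G 3 B).card * 9 := by
    refine Finset.sum_le_card_nsmul _ _ _ fun D hD => ?_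
    obtain ⟨hD, hD'⟩ := Finset.mem_sdiff.1 hD
    exact card_extOn_five_le hB hclB hy hD hD'
  have h4 : ∑ D ∈ freeOn G 3 B, (extOn G 5 B y D).card ≤ (freeOn G 3 B).card * 12 := by
    refine Finset.sum_le_card_nsmul _ _ _ fun D hD => ?_
    have := card_extOn_clique_le (k := 5) (by norm_num) hclB hy (by omega)
      ((mem_freeOn.1 hD).1.tournOn subset_rfl hclB)
    simpa [hB] using this
  have h5 := Finset.card_sdiff_add_card_eq_card hsub
  have h6 := Finset.card_sdiff_add_card_eq_card hsub'
  have h7 := card_freeOn_three_four_le hB hclB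
  have h8 := card_freeOn_four_four_le hB hclB
  have h9 := card_freeOn_clique_le_two_pow (k := 5) hclB
  rw [hB] at h9
  norm_num [Nat.choose] at h9
  omega

lemma card_freeOn_four_five_lt (hA : A.card = 5) (hcl : G.IsClique (A : Set V)) :
    (freeOn G 4 A).card < 2 ^ 8 := by
  obtain ⟨y, B, rfl, hB, hyB, hclB, hy⟩ := exists_insert_of_isClique hA hcl
  have hsub : freeOn G 3 B ⊆ freeOn G 4 B := freeOn_subset_freeOn (by norm_num) (by norm_num)
  have h1 := card_freeOn_insert_le (G := G) (k := 4) hyB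
  rw [← Finset.sum_sdiff hsub] at h1
  have h3 : ∑ D ∈ freeOn G 4 B \ freeOn G 3 B, (extOn G 4 B y D).card ≤
      (freeOn G 4 B \ freeOn G 3 B).card * 3 := by
    refine Finset.sum_le_card_nsmul _ _ _ fun D hD => ?_
    obtain ⟨hD, hD'⟩ := Finset.mem_sdiff.1 hD
    exact card_extOn_four_le hB hclB hy hD hD'
  have h4 : ∑ D ∈ freeOn G 3 B, (extOn G 4 B y D).card ≤ (freeOn G 3 B).card * 8 := by
    refine Finset.sum_le_card_nsmul _ _ _ fun D hD => ?_
    have := card_extOn_clique_le (k := 4) (by norm_num) hclB hy (by omega)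
      ((mem_freeOn.1 hD).1.tournOn subset_rfl hclB)
    simpa [hB] using this
  have h5 := Finset.card_sdiff_add_card_eq_card hsub
  have h7 := card_freeOn_three_four_le hB hclB
  have h8 := card_freeOn_four_four_le hB hclB
  omega

/-- More than half of the tournaments on `k ≥ 5` vertices are strong. -/
lemma two_mul_card_freeOn_lt (hk : 5 ≤ k) (hA : A.card = k) (hcl : G.IsClique (A : Set V)) :
    2 * (freeOn G k A).card < 2 ^ k.choose 2 := by
  induction k, hk using Nat.le_induction generalizing A with
  | base =>
    have := card_freeOn_five_five_lt hA hcl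
    norm_num [Nat.choose]
    omega
  | succ k hk ih =>
    obtain ⟨y, B, rfl, hB, hyB, hclB, hy⟩ := exists_insert_of_isClique hA hcl
    have h1 := card_freeOn_insert_clique_le (by omega) hB hclB hy
    have h2 := ih hB hclB
    obtain ⟨s, rfl⟩ : ∃ s, k = s + 5 := ⟨k - 5, by omega⟩
    rw [Nat.choose_succ_succ' (s + 5) 1, Nat.choose_one_right, pow_add]
    set x := 2 ^ (s + 5).choose 2
    rw [show s + 5 - 2 = s + 3 by omega, pow_add] at h1
    rw [pow_add]
    have : 1 ≤ 2 ^ s := Nat.one_le_two_pow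
    nlinarith

lemma card_freeOn_triangle_union_le {z : V} (hA : A.card = 3) (hcl : G.IsClique (A : Set V))
    (hy : ∀ x ∈ A, G.Adj y x) (hz : ∀ x ∈ A, G.Adj z x) (hyz : ¬ G.Adj y z) (hne : y ≠ z) :
    (freeOn G 4 (A ∪ {y, z})).card ≤ 224 := by
  have hyA : y ∉ A := fun h => G.irrefl (hy y h)
  have hzA : z ∉ A := fun h => G.irrefl (hz z h)
  have h1 := card_freeOn_union_le G 4 A {y, z}
  have e1 : ({y, z} : Finset V) \ A = {y, z} := by
    rw [Finset.sdiff_eq_self_iff_disjoint]; simp [hyA, hzA]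
  have e2 : A \ {y, z} = A := by
    rw [Finset.sdiff_eq_self_iff_disjoint]; simp [hyA, hzA]
  have h2 : (freeOn G 4 {y, z}).card ≤ 1 := by
    apply card_freeOn_le_one
    have : ¬ G.Adj z y := fun h => hyz h.symm
    simp [hyz, this]
  have hsub : freeOn G 3 A ⊆ freeOn G 4 A := freeOn_subset_freeOn (by norm_num) (by norm_num)
  rw [e1, e2, ← Finset.sum_sdiff hsub] at h1
  have hbd : ∀ D b, (∀ w ∈ ({y, z} : Finset V), (extOn G 4 A w D).card ≤ b) →
      (freeOn G 4 {y, z}).card * ∏ w ∈ {y, z}, (extOn G 4 A w D).card ≤ b ^ 2 := by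
    intro D b hb
    have := Finset.prod_le_pow_card _ _ _ hb
    rw [Finset.card_pair hne] at this
    nlinarith
  have hadj : ∀ w ∈ ({y, z} : Finset V), ∀ x ∈ A, G.Adj w x := by
    simpa using ⟨hy, hz⟩
  have h3 := Finset.sum_le_card_nsmul (freeOn G 4 A \ freeOn G 3 A) _ (2 ^ 2) fun D hD =>
    hbd D 2 fun w hw => by
      obtain ⟨hD, hD'⟩ := Finset.mem_sdiff.1 hD
      obtain ⟨S, hSA, -, hSk, hS⟩ := strongOn_of_notMem_freeOn hD hD'
      obtain rfl := Finset.eq_of_subset_of_card_le hSA (by omega)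
      exact card_extOn_strong_le (by omega) hcl (hadj w hw) (by omega) hS
  have h4 := Finset.sum_le_card_nsmul (freeOn G 3 A) _ (6 ^ 2) fun D hD =>
    hbd D 6 fun w hw => by
      have := card_extOn_clique_le (k := 4) (by norm_num) hcl (hadj w hw) (by omega)
        ((mem_freeOn.1 hD).1.tournOn subset_rfl hcl)
      simpa [hA] using this
  have h5 := Finset.card_sdiff_add_card_eq_card hsub
  have h6 := card_freeOn_three_three_le hA hcl
  have h7 := card_freeOn_clique_le_two_pow (k := 4) hcl
  rw [hA] at h7
  norm_num [Nat.choose] at h7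
  simp only [smul_eq_mul] at h3 h4
  omega

lemma turanNum_three_four : turanNum 3 4 = 5 := by
  have := turanNum_formula 3 4 (by norm_num)
  omega

lemma choose_two_le_turanNum_succ (r : ℕ) (hr : 0 < r) :
    (r + 1).choose 2 ≤ turanNum r (r + 1) + 1 := by
  have h1 := choose_two_le_turanNum r r hr le_rfl
  have h2 := turanNum_add r r 1 hr
  have h3 : (r + 1).choose 2 = r + r.choose 2 := by simp [Nat.choose_succ_succ' r 1]
  obtain ⟨s, rfl⟩ : ∃ s, r = s + 1 := ⟨r - 1, by omega⟩
  simp only [Nat.add_sub_cancel] at h2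
  have : turanNum (s + 1) (s + 1) + s ≤ turanNum (s + 1) (s + 1 + 1) :=
    le_of_mul_le_mul_left (a := s + 1) (by nlinarith) (by omega)
  omega

/-- The cross term between a set of `m` vertices and a clique on `w` vertices. -/
lemma exists_turanNum_add_eq (r m w : ℕ) (hr : 0 < r) : ∃ c,
    turanNum r (m + w) = turanNum r m + turanNum r w + c ∧ (r - 1) * (m * w) ≤ r * c := by
  have h := turanNum_add r m w hr
  have h1 : turanNum r m + turanNum r w ≤ turanNum r (m + w) :=
    le_of_mul_le_mul_left (a := r) (by rw [mul_add]; exact (Nat.le_add_right _ _).trans h) hr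
  obtain ⟨c, hc⟩ := Nat.exists_eq_add_of_le h1
  refine ⟨c, hc, ?_⟩
  rw [hc] at h
  nlinarith

/-- A clique with at least `max k 5` vertices has fewer than `2 ^ t_{k-1}(n)` free orientations. -/
lemma card_freeOn_clique_lt (hk : 4 ≤ k) (hcl : G.IsClique (A : Set V)) (hkA : k ≤ A.card)
    (h5 : 5 ≤ A.card) : (freeOn G k A).card < 2 ^ turanNum (k - 1) A.card := by
  induction hn : A.card using Nat.strong_induction_on generalizing A with
  | _ n ih =>
    rw [hn] at hkA h5
    by_cases h1 : n = k
    · subst h1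
      have h2 := two_mul_card_freeOn_lt h5 hn hcl
      have h3 := choose_two_le_turanNum_succ (n - 1) (by omega)
      rw [show n - 1 + 1 = n by omega] at h3
      have h4 := h2.trans_le (Nat.pow_le_pow_right (by norm_num) h3)
      rw [pow_succ] at h4
      omega
    by_cases h2 : k = 4 ∧ n = 5
    · obtain ⟨rfl, rfl⟩ := h2
      have h3 := turanNum_formula 3 5 (by norm_num)
      have h4 : turanNum (4 - 1) 5 = 8 := by simp only [Nat.add_one_sub_one]; omega
      rw [h4]
      exact card_freeOn_four_five_lt hn hcl
    · obtain ⟨w, rfl⟩ : ∃ w, n = w + 1 := ⟨n - 1, by omega⟩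
      obtain ⟨y, B, rfl, hB, hyB, hBcl, hy⟩ := exists_insert_of_isClique hn hcl
      have h3 := ih w (by omega) hBcl (by omega) (by omega) hB
      refine (card_freeOn_insert_le_mul hyB fun D hD => card_extOn_clique_le (by omega) hBcl hy
        (by omega) ((mem_freeOn.1 hD).1.tournOn subset_rfl hBcl)).trans_lt ?_
      rw [hB]
      obtain ⟨s, rfl⟩ : ∃ s, k = s + 1 := ⟨k - 1, by omega⟩
      obtain ⟨j, rfl⟩ : ∃ j, w = s + j := ⟨w - s, by omega⟩
      obtain ⟨c, hc, hc'⟩ := exists_turanNum_add_eq s 1 (s + j) (by omega)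
      have e1 : s + j + 4 - (s + 1) = j + 3 := by omega
      have e2 : s + 1 - 3 = s - 2 := by omega
      have hle : (j + 3) * 2 ^ (s - 2) ≤ 2 ^ c := by
        rcases (show j = 1 ∨ 2 ≤ j by omega) with rfl | hj
        · have : s ≤ c := by
            obtain ⟨q, rfl⟩ : ∃ q, s = q + 1 := ⟨s - 1, by omega⟩
            simp only [Nat.add_sub_cancel] at hc'
            by_contra! hlt
            nlinarith
          calc (1 + 3) * 2 ^ (s - 2) = 2 ^ (2 + (s - 2)) := by rw [pow_add]; norm_num
            _ ≤ 2 ^ c := Nat.pow_le_pow_right (by norm_num) (by omega)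
        · simpa using mul_two_pow_pow_le (m := 1) (by omega) (add_three_pow_three_le j hj) hc'
      rw [e1, e2, add_comm (s + j) 1, Nat.add_sub_cancel, hc, pow_add, pow_add]
      simp only [Nat.add_sub_cancel] at h3
      calc _ < 2 ^ turanNum s (s + j) * 2 ^ c := by
            apply Nat.mul_lt_mul_of_lt_of_le h3 hle (by positivity)
        _ ≤ _ := by
            gcongr
            exact Nat.le_mul_of_pos_left _ (by positivity)

/-- Splitting off a subset `W` of `A`. -/
lemma card_freeOn_le_of_subset {h : ℕ} {W : Finset V} (hWA : W ⊆ A)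
    (hh : ∀ D ∈ freeOn G k W, ∀ y ∈ A \ W, (extOn G k W y D).card ≤ h) :
    (freeOn G k A).card ≤
      (freeOn G k W).card * ((freeOn G k (A \ W)).card * h ^ (A \ W).card) := by
  have e1 : W \ (A \ W) = W := by grind
  have e2 : (A \ W) \ W = A \ W := by grind
  have h1 := card_freeOn_union_le_mul (G := G) (k := k) (A := W) (B := A \ W) (h := h)
    fun D hD y hy => by rw [e1]; exact hh D hD y (e2 ▸ hy)
  rwa [Finset.union_sdiff_of_subset hWA, e2] at h1

/-- Removing a maximal clique with fewer than `k` vertices. -/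
lemma card_freeOn_le_of_card_lt (hk : 4 ≤ k) {W : Finset V} (hWA : W ⊆ A)
    (hcl : G.IsClique (W : Set V)) (hWk : W.card < k)
    (hW : ∀ y ∈ A \ W, ∃ x ∈ W, ¬ G.Adj y x)
    (hB : (freeOn G k (A \ W)).card ≤ 2 ^ turanNum (k - 1) (A \ W).card) :
    (freeOn G k A).card ≤ 2 ^ turanNum (k - 1) A.card := by
  have hn : A.card = (A \ W).card + W.card := (Finset.card_sdiff_add_card_eq_card hWA).symm
  obtain ⟨c, hc, hc'⟩ := exists_turanNum_add_eq (k - 1) (A \ W).card W.card (by omega)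
  have h1 := card_freeOn_le_of_subset (G := G) (k := k) hWA (h := 2 ^ (W.card - 1))
    fun D _ y hy => by
      refine card_extOn_le_two_pow.trans (Nat.pow_le_pow_right (by norm_num) ?_)
      obtain ⟨x, hx, hxy⟩ := hW y hy
      have : (W.filter (G.Adj y)).card < W.card :=
        Finset.card_lt_card (Finset.filter_ssubset.2 ⟨x, hx, hxy⟩)
      omega
  have h2 : (freeOn G k W).card ≤ 2 ^ turanNum (k - 1) W.card :=
    (card_freeOn_clique_le_two_pow hcl).trans
      (Nat.pow_le_pow_right (by norm_num) (choose_two_le_turanNum _ _ (by omega) (by omega)))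
  have h3 : (W.card - 1) * (A \ W).card ≤ c := by
    refine le_of_mul_le_mul_left (a := k - 1) (le_trans ?_ hc') (by omega)
    obtain ⟨s, rfl⟩ : ∃ s, k = s + 2 := ⟨k - 2, by omega⟩
    simp only [Nat.add_succ_sub_one, Nat.add_sub_cancel]
    rcases Nat.eq_zero_or_pos W.card with h0 | h0
    · simp [h0]
    obtain ⟨v, hv⟩ : ∃ v, W.card = v + 1 := ⟨W.card - 1, by omega⟩
    rw [hv, Nat.add_sub_cancel]
    have : (s + 1) * v ≤ s * (v + 1) := by nlinarith
    nlinarith [Nat.mul_le_mul_right (A \ W).card this]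
  rw [hn, hc]
  calc _ ≤ 2 ^ turanNum (k - 1) W.card * (2 ^ turanNum (k - 1) (A \ W).card * 2 ^ c) := by
        refine h1.trans (Nat.mul_le_mul h2 (Nat.mul_le_mul hB ?_))
        rw [← pow_mul]
        exact Nat.pow_le_pow_right (by norm_num) h3
    _ = _ := by rw [← pow_add, ← pow_add]; ring_nf

/-- Removing a maximal clique with at least `max k 5` vertices. -/
lemma card_freeOn_lt_of_le_card (hk : 4 ≤ k) {W : Finset V} (hWA : W ⊆ A)
    (hcl : G.IsClique (W : Set V)) (hkW : k ≤ W.card) (h5 : 5 ≤ W.card)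
    (hW : ∀ y ∈ A \ W, ∃ x ∈ W, ¬ G.Adj y x)
    (hB : (freeOn G k (A \ W)).card ≤ 2 ^ turanNum (k - 1) (A \ W).card ∨
      k = 4 ∧ (A \ W).card = 4 ∧ (freeOn G k (A \ W)).card ≤ 40) :
    (freeOn G k A).card < 2 ^ turanNum (k - 1) A.card := by
  have hn : A.card = (A \ W).card + W.card := (Finset.card_sdiff_add_card_eq_card hWA).symm
  obtain ⟨c, hc, hc'⟩ := exists_turanNum_add_eq (k - 1) (A \ W).card W.card (by omega)
  have h1 := card_freeOn_le_of_subset (G := G) (k := k) hWA fun D hD y hy =>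
    card_extOn_le (by omega) hcl (hW y hy) (by omega)
      ((mem_freeOn.1 hD).1.tournOn subset_rfl hcl)
  have h2 := card_freeOn_clique_lt hk hcl hkW h5
  obtain ⟨j, hj⟩ : ∃ j, W.card = k - 1 + j := ⟨W.card - (k - 1), by omega⟩
  have e1 : W.card + 3 - k = j + 2 := by omega
  have e2 : k - 3 = k - 1 - 2 := by omega
  rw [e1, e2] at h1
  rw [hj] at hc'
  suffices h3 : (freeOn G k (A \ W)).card * ((j + 2) * 2 ^ (k - 1 - 2)) ^ (A \ W).card ≤
      2 ^ (turanNum (k - 1) (A \ W).card + c) by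
    calc _ < 2 ^ turanNum (k - 1) W.card * 2 ^ (turanNum (k - 1) (A \ W).card + c) :=
          h1.trans_lt (Nat.mul_lt_mul_of_lt_of_le h2 h3 (by positivity))
      _ = _ := by rw [hn, hc, ← pow_add]; ring_nf
  rcases hB with hB | ⟨rfl, hm, hB⟩
  · rw [pow_add]
    exact Nat.mul_le_mul hB
      (mul_two_pow_pow_le (by omega) (add_two_pow_three_le j (by omega)) hc')
  · rw [hm] at hc' ⊢
    simp only [Nat.add_one_sub_one] at hc' hj ⊢
    rw [turanNum_three_four]
    refine (Nat.mul_le_mul_right _ hB).trans ?_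
    refine le_of_pow_le_pow_left₀ (n := 3) (by positivity) (by positivity) ?_
    calc (40 * ((j + 2) * 2 ^ (3 - 2)) ^ 4) ^ 3
        = 1000 * 2 ^ 14 * (2 * (j + 2) ^ 3) ^ 4 := by ring
      _ ≤ 2 ^ 10 * 2 ^ 14 * (2 ^ (2 * j + 3)) ^ 4 := by
        gcongr
        · norm_num
        · exact two_mul_add_two_pow_three_le j (by omega)
      _ = 2 ^ (8 * j + 36) := by rw [← pow_mul, ← pow_add, ← pow_add]; ring_nf
      _ ≤ 2 ^ ((5 + c) * 3) := Nat.pow_le_pow_right (by norm_num) (by omega)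
      _ = _ := by rw [pow_mul]

lemma card_freeOn_insert_four_le (hA : A.card = 4) (hcl : G.IsClique (A : Set V)) (hyA : y ∉ A)
    (hy : ∃ x ∈ A, ¬ G.Adj y x) : (freeOn G 4 (insert y A)).card ≤ 224 := by
  obtain ⟨x, hx, hxy⟩ := hy
  have hsub : A.filter (G.Adj y) ⊆ A.erase x := by
    intro z hz
    rw [Finset.mem_filter] at hz
    exact Finset.mem_erase.2 ⟨fun h => hxy (h ▸ hz.2), hz.1⟩
  have h3 : (A.erase x).card = 3 := by rw [Finset.card_erase_of_mem hx, hA]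
  by_cases h : ∀ z ∈ A.erase x, G.Adj y z
  · have e : insert y A = A.erase x ∪ {y, x} := by grind
    rw [e]
    exact card_freeOn_triangle_union_le h3 (hcl.subset (by simp)) h
      (fun z hz => hcl hx (Finset.mem_of_mem_erase hz) (Finset.ne_of_mem_erase hz).symm)
      hxy (by rintro rfl; exact hyA hx)
  · push Not at h
    obtain ⟨z, hz, hzy⟩ := h
    have h2 : (A.filter (G.Adj y)).card < 3 := by
      rw [← h3]
      exact Finset.card_lt_card
        ((Finset.ssubset_iff_of_subset hsub).2 ⟨z, hz, by simp [hzy]⟩)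
    have h4 := card_freeOn_insert_le_mul (G := G) (k := 4) hyA (h := 2 ^ 2) fun D _ =>
      card_extOn_le_two_pow.trans (Nat.pow_le_pow_right (by norm_num) (by omega))
    have := card_freeOn_four_four_le hA hcl
    omega

/-- Removing a maximal clique with four vertices, for `k = 4`. -/
lemma card_freeOn_lt_of_card_four {W : Finset V} (hWA : W ⊆ A) (hcl : G.IsClique (W : Set V))
    (hW4 : W.card = 4) (hne : (A \ W).Nonempty) (hW : ∀ y ∈ A \ W, ∃ x ∈ W, ¬ G.Adj y x)
    (hB : (freeOn G 4 (A \ W)).card ≤ 2 ^ turanNum 3 (A \ W).card ∨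
      (A \ W).card = 4 ∧ (freeOn G 4 (A \ W)).card ≤ 40) :
    (freeOn G 4 A).card < 2 ^ turanNum 3 A.card := by
  have hn : A.card = (A \ W).card + W.card := (Finset.card_sdiff_add_card_eq_card hWA).symm
  obtain ⟨c, hc, hc'⟩ := exists_turanNum_add_eq 3 (A \ W).card W.card (by omega)
  obtain ⟨y, hy⟩ := hne
  obtain ⟨hyA, hyW⟩ := Finset.mem_sdiff.1 hy
  have h1 := card_freeOn_insert_four_le hW4 hcl hyW (hW y hy)
  have e1 : insert y W \ (A \ W) = W := by grind
  have e2 : (A \ W) \ insert y W = (A \ W).erase y := by grind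
  have e3 : insert y W ∪ (A \ W) = A := by grind
  have h2 := card_freeOn_union_le_mul (G := G) (k := 4) (A := insert y W) (B := A \ W) (h := 6)
    fun D hD z hz => by
      rw [e1]
      refine (card_extOn_le (by norm_num) hcl (hW z (Finset.mem_sdiff.1 hz).1) (by omega)
        ((mem_freeOn.1 hD).1.tournOn (Finset.subset_insert _ _) hcl)).trans ?_
      norm_num [hW4]
  rw [e2, e3, Finset.card_erase_of_mem hy] at h2
  have hpos : 0 < (A \ W).card := Finset.card_pos.2 ⟨y, hy⟩
  rw [hW4, turanNum_three_four] at hc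
  rw [hW4] at hc'
  rw [hn, hW4]
  rcases hB with hB | ⟨hm, hB⟩
  · have h3 := ext_pow_lt (A \ W).card (5 + c) hpos (by omega)
    calc _ ≤ 2 ^ turanNum 3 (A \ W).card * (224 * 6 ^ ((A \ W).card - 1)) := by
          refine h2.trans ((Nat.mul_le_mul h1 (Nat.mul_le_mul_right _ hB)).trans_eq ?_)
          ring
      _ < 2 ^ turanNum 3 (A \ W).card * 2 ^ (5 + c) := by gcongr
      _ = _ := by rw [hc, ← pow_add, add_assoc]
  · rw [hm] at h2 hc' hc ⊢
    calc _ ≤ 224 * (40 * 6 ^ (4 - 1)) :=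
          h2.trans (Nat.mul_le_mul h1 (Nat.mul_le_mul_right _ hB))
      _ < 2 ^ 21 := by norm_num
      _ ≤ _ := by
          apply Nat.pow_le_pow_right (by norm_num)
          rw [hc, turanNum_three_four]
          omega

/-- The main bound: `G[A]` has at most `2 ^ t_{k-1}(|A|)` free orientations, and fewer if it
contains a `k`-clique, except when `k = 4` and `G[A] = K₄`. -/
lemma card_freeOn_bound (hk : 4 ≤ k) (G : SimpleGraph V) (A : Finset V) :
    ((freeOn G k A).card ≤ 2 ^ turanNum (k - 1) A.card ∧
      ((∃ S ⊆ A, G.IsClique (S : Set V) ∧ S.card = k) →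
        (freeOn G k A).card < 2 ^ turanNum (k - 1) A.card)) ∨
    (k = 4 ∧ A.card = 4 ∧ G.IsClique (A : Set V) ∧ (freeOn G k A).card ≤ 40) := by
  induction A using Finset.strongInduction with
  | H A ih =>
    obtain ⟨W, hWmem, hWmax⟩ := Finset.exists_max_image
      (A.powerset.filter fun S : Finset V => G.IsClique (S : Set V)) Finset.card ⟨∅, by simp⟩
    simp only [Finset.mem_filter, Finset.mem_powerset] at hWmem hWmax
    obtain ⟨hWA, hcl⟩ := hWmem
    have hW : ∀ y ∈ A \ W, ∃ x ∈ W, ¬ G.Adj y x := by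
      intro y hy
      obtain ⟨hyA, hyW⟩ := Finset.mem_sdiff.1 hy
      by_contra! hadj
      have := hWmax (insert y W) ⟨Finset.insert_subset hyA hWA, by
        rw [Finset.coe_insert]
        exact hcl.insert fun x hx _ => hadj x hx⟩
      rw [Finset.card_insert_of_notMem hyW] at this
      omega
    rcases A.eq_empty_or_nonempty with rfl | ⟨a, ha⟩
    · left
      refine ⟨(card_freeOn_le_one (by simp)).trans Nat.one_le_two_pow, ?_⟩
      rintro ⟨S, hS, -, hSk⟩
      rw [Finset.subset_empty.1 hS, Finset.card_empty] at hSk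
      omega
    have hWpos : 0 < W.card := by
      simpa using hWmax {a} ⟨by simpa using ha, by simp⟩
    have hB := ih (A \ W) (Finset.sdiff_ssubset hWA (Finset.card_pos.1 hWpos))
    rcases lt_or_ge W.card k with hlt | hge
    · left
      refine ⟨card_freeOn_le_of_card_lt hk hWA hcl hlt hW ?_, ?_⟩
      · rcases hB with hB | ⟨rfl, h4, hcl', -⟩
        · exact hB.1
        · have := hWmax _ ⟨Finset.sdiff_subset, hcl'⟩
          omega
      · rintro ⟨S, hS, hScl, hSk⟩
        have := hWmax S ⟨hS, hScl⟩
        omega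
    have hB' : (freeOn G k (A \ W)).card ≤ 2 ^ turanNum (k - 1) (A \ W).card ∨
        k = 4 ∧ (A \ W).card = 4 ∧ (freeOn G k (A \ W)).card ≤ 40 :=
      hB.imp And.left fun h => ⟨h.1, h.2.1, h.2.2.2⟩
    rcases lt_or_ge W.card 5 with h5 | h5
    · obtain rfl : k = 4 := by omega
      have hW4 : W.card = 4 := by omega
      rcases (A \ W).eq_empty_or_nonempty with he | hne
      · obtain rfl : A = W := (Finset.sdiff_eq_empty_iff_subset.1 he).antisymm hWA
        exact Or.inr ⟨rfl, hW4, hcl, card_freeOn_four_four_le hW4 hcl⟩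
      · have := card_freeOn_lt_of_card_four hWA hcl hW4 hne hW (hB'.imp_right And.right)
        exact Or.inl ⟨this.le, fun _ => this⟩
    · have := card_freeOn_lt_of_le_card hk hWA hcl hge h5 hW hB'
      exact Or.inl ⟨this.le, fun _ => this⟩

end

/-- An orientation without strongly connected `k`-vertex tournaments lies in `freeOn`. -/
lemma FreeOrient.mem_freeOn [Fintype V] [DecidableEq V] {G : SimpleGraph V} {k : ℕ}
    {D : G.Orient}
    (hD : FreeOrient (SFam k) D) : D.1 ∈ freeOn G k Finset.univ := by
  rw [_root_.mem_freeOn]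
  refine ⟨⟨fun u v h => ⟨D.2.1 u v h, by simp, by simp⟩, fun u _ v _ h => D.2.2 u v h⟩, ?_⟩
  intro S _ hcl hSk hst
  let e : Fin k ≃ S := (Finset.equivFinOfCardEq hSk).symm
  have hinj : Function.Injective fun i => (e i : V) := Subtype.val_injective.comp e.injective
  let T : (⊤ : SimpleGraph (Fin k)).Orient :=
    ⟨fun i j => D.1 (e i) (e j), fun i j h => by
      rw [SimpleGraph.top_adj]
      rintro rfl
      exact G.irrefl (D.2.1 _ _ h), fun i j h =>
        D.2.2 _ _ (hcl (e i).2 (e j).2 (hinj.ne ((SimpleGraph.top_adj _ _).1 h)))⟩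
  refine hD k T ⟨rfl, fun i j => ?_⟩ ⟨fun i => e i, hinj, fun _ _ h => h⟩
  obtain ⟨j', hj', h⟩ := hst (fun v => ∃ j, (e j : V) = v ∧ Relation.ReflTransGen T.1 i j)
    (by
      rintro _ _ w hw ⟨a, rfl, ha⟩ hd
      refine ⟨e.symm ⟨w, hw⟩, by simp, ha.tail ?_⟩
      simpa [T] using hd)
    (e i) (e i).2 ⟨i, rfl, .refl⟩ (e j) (e j).2
  rwa [hinj hj'] at h

lemma numOrient_le_card_freeOn [Fintype V] [DecidableEq V] (G : SimpleGraph V) (k : ℕ) :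
    numOrient G (SFam k) ≤ (freeOn G k Finset.univ).card := by
  rw [numOrient, ← Nat.card_eq_finsetCard]
  exact Nat.card_le_card_of_injective
    (fun D : {D : G.Orient // FreeOrient (SFam k) D} =>
      (⟨D.1.1, D.2.mem_freeOn⟩ : freeOn G k Finset.univ))
    fun D E h => Subtype.ext (Subtype.ext (by simpa using h))

lemma freeOrient_of_cliqueFree {G : SimpleGraph V} {k : ℕ} (hG : G.CliqueFree k) (D : G.Orient) :
    FreeOrient (SFam k) D := by
  rintro _ T ⟨rfl, -⟩ ⟨φ, hφ, h⟩
  refine SimpleGraph.IsContained.not_cliqueFree ⟨⟨⟨φ, fun {i j} hij => ?_⟩, hφ⟩⟩ hG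
  by_cases hT : T.1 i j
  · exact D.2.1 _ _ (h _ _ hT)
  · have := T.2.2 j i hij.symm
    exact (D.2.1 _ _ (h _ _ (this.2 hT))).symm

/-- A graph with `m` edges has `2 ^ m` orientations. -/
lemma card_orient [Fintype V] [LinearOrder V] (G : SimpleGraph V) :
    Nat.card G.Orient = 2 ^ G.edgeFinset.card := by
  let e : G.Orient ≃ (G.edgeSet → Prop) :=
    { toFun := fun D p => D.1 p.1.inf p.1.sup
      invFun := fun f => ⟨fun u v => ∃ h : G.Adj u v, (f ⟨s(u, v), h⟩ ↔ u < v),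
        fun u v h => h.1, fun u v h => by
          have h2 : s(u, v) = s(v, u) := Sym2.eq_swap
          simp only [h, h.symm, exists_true_left, h2]
          rcases lt_trichotomy u v with h1 | h1 | h1
          · simp [h1, h1.not_gt]
          · exact absurd h1 h.ne
          · simp [h1, h1.not_gt]⟩
      left_inv := fun D => by
        ext u v
        constructor
        · rintro ⟨h, h'⟩
          rcases lt_or_gt_of_ne h.ne with h1 | h1
          · simpa [h1, h1.le] using h'
          · have := D.2.2 v u h.symm
            simp [h1.le, h1.not_gt] at h'
            tauto
        · intro h
          refine ⟨D.2.1 _ _ h, ?_⟩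
          have h0 := D.2.1 _ _ h
          rcases lt_or_gt_of_ne h0.ne with h1 | h1
          · simpa [h1, h1.le] using h
          · have := D.2.2 v u h0.symm
            simp [h1.le, h1.not_gt]
            tauto
      right_inv := fun f => by
        ext ⟨p, hp⟩
        induction p with
        | h u v =>
          have hadj : G.Adj u v := hp
          rcases lt_or_gt_of_ne hadj.ne with h1 | h1
          · simp [h1, h1.le, hadj]
          · have h2 : s(v, u) = s(u, v) := Sym2.eq_swap
            simp [h1, h1.le, hadj.symm, h2] }
  rw [Nat.card_congr e, Nat.card_eq_fintype_card, Fintype.card_fun, Fintype.card_prop,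
    SimpleGraph.edgeFinset_card]

lemma numOrient_of_cliqueFree {n k : ℕ} {G : SimpleGraph (Fin n)} (hG : G.CliqueFree k) :
    numOrient G (SFam k) = 2 ^ G.edgeFinset.card := by
  rw [← card_orient, numOrient]
  exact Nat.card_congr (Equiv.subtypeUnivEquiv (freeOrient_of_cliqueFree hG))

/-- For `n ≥ k ≥ 4` with `n ≥ 5` or `k ≥ 5`, the maximum number of orientations
of an `n`-vertex graph with no strongly connected `K_k` is `2 ^ t_{k-1}(n)`,
attained only by the Turán graph `T_{k-1}(n)`. -/
theorem max_SFam_free_orientations (n k : ℕ) (hk : 4 ≤ k) (hkn : k ≤ n)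
    (h5 : 5 ≤ n ∨ 5 ≤ k) :
    maxOrient n (SFam k) = 2 ^ turanNum (k - 1) n ∧
    ∀ G : SimpleGraph (Fin n), numOrient G (SFam k) = 2 ^ turanNum (k - 1) n →
      Nonempty (G ≃g SimpleGraph.turanGraph n (k - 1)) := by
  have hmain : ∀ G : SimpleGraph (Fin n), numOrient G (SFam k) ≤ 2 ^ turanNum (k - 1) n ∧
      (¬ G.CliqueFree k → numOrient G (SFam k) < 2 ^ turanNum (k - 1) n) := by
    intro G
    have h1 := numOrient_le_card_freeOn G k
    have h2 := card_freeOn_bound hk G Finset.univ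
    rw [Finset.card_univ, Fintype.card_fin] at h2
    rcases h2 with ⟨h2, h3⟩ | ⟨h2, h3, -⟩
    · refine ⟨h1.trans h2, fun hG => h1.trans_lt (h3 ?_)⟩
      simp only [SimpleGraph.CliqueFree, not_forall, not_not] at hG
      obtain ⟨S, hS⟩ := hG
      exact ⟨S, Finset.subset_univ _, hS.isClique, hS.card_eq⟩
    · omega
  have hturan : (SimpleGraph.turanGraph n (k - 1)).CliqueFree k := by
    have := SimpleGraph.turanGraph_cliqueFree (n := n) (r := k - 1) (by omega)
    rwa [show k - 1 + 1 = k by omega] at this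
  have hnum : numOrient (SimpleGraph.turanGraph n (k - 1)) (SFam k) = 2 ^ turanNum (k - 1) n := by
    rw [numOrient_of_cliqueFree hturan, turanNum]
    congr!
  constructor
  · refine (IsGreatest.csSup_eq ⟨⟨_, hnum⟩, ?_⟩)
    rintro _ ⟨G, rfl⟩
    exact (hmain G).1
  · intro G hG
    have hfree : G.CliqueFree k := by
      by_contra h
      exact ((hmain G).2 h).ne hG
    rw [numOrient_of_cliqueFree hfree] at hG
    have hcard : G.edgeFinset.card = turanNum (k - 1) n := Nat.pow_right_injective le_rfl hG
    have hmax := SimpleGraph.isTuranMaximal_turanGraph (n := n) (r := k - 1) (by omega)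
    have hG' : G.IsTuranMaximal (k - 1) := by
      refine ⟨by rwa [show k - 1 + 1 = k by omega], fun H _ hH => ?_⟩
      have h1 := hmax.2 hH
      have h2 : G.edgeFinset.card = (SimpleGraph.turanGraph n (k - 1)).edgeFinset.card := hcard
      convert h1 using 1
    have hiso := hG'.nonempty_iso_turanGraph
    rwa [Fintype.card_fin] at hiso
end
end

section
/- S_4(4) = 40, and the complete graph K_4 is the unique 4-vertex graph G with S_4(G) = 40 (i.e., the unique 𝓢_4-extremal graph on 4 vertices). -/
open scoped Classical

noncomputable section

universe u

variable {V : Type u}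

namespace SimpleGraph

variable [LinearOrder V]

/-- The ordered pairs `u < v` of adjacent vertices. -/
abbrev UpPair (G : SimpleGraph V) : Type u := {p : V × V // p.1 < p.2 ∧ G.Adj p.1 p.2}

/-- The arc relation in which `f` tells which edges of `G` point upwards. -/
def arcOf (G : SimpleGraph V) (f : G.UpPair → Bool) (u v : V) : Prop :=
  (∃ h : u < v ∧ G.Adj u v, f ⟨(u, v), h⟩ = true) ∨
    ∃ h : v < u ∧ G.Adj v u, f ⟨(v, u), h⟩ = false

/-- An orientation is determined by which edges point upwards. -/
def orientEquiv (G : SimpleGraph V) : G.Orient ≃ (G.UpPair → Bool) where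
  toFun D p := decide (D.1 p.1.1 p.1.2)
  invFun f := ⟨G.arcOf f, by
    refine ⟨?_, fun u v huv => ?_⟩
    · rintro u v (⟨h, -⟩ | ⟨h, -⟩)
      exacts [h.2, h.2.symm]
    · rcases lt_or_gt_of_ne huv.ne with h | h <;>
        simp [arcOf, h, h.not_gt, huv, huv.symm]⟩
  left_inv D := by
    ext u v
    by_cases huv : G.Adj u v
    · have hD := D.2.2 u v huv
      rcases lt_or_gt_of_ne huv.ne with h | h
      · simp [arcOf, h, h.not_gt, huv]
      · simp [arcOf, h, h.not_gt, huv.symm, hD]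
    · have : ¬ D.1 u v := fun h => huv (D.2.1 u v h)
      simp [arcOf, this, huv, G.adj_comm v u]
  right_inv f := by
    funext ⟨⟨u, v⟩, h⟩
    have h' : u < v ∧ G.Adj u v := h
    simp [arcOf, h'.1.not_gt, h'.1, h'.2]

end SimpleGraph

/-- A relation on a finite type connects every ordered pair of elements iff every nonempty
proper subset has an outgoing arc. -/
theorem forall_reflTransGen_iff_exists_arc {α : Type*} [Fintype α] (R : α → α → Prop) :
    (∀ u v, Relation.ReflTransGen R u v) ↔
      ∀ s : Finset α, s.Nonempty → s ≠ Finset.univ → ∃ u ∈ s, ∃ v ∉ s, R u v := by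
  constructor
  · rintro h s ⟨a, ha⟩ hs
    obtain ⟨b, hb⟩ : ∃ b, b ∉ s := by simpa [Finset.eq_univ_iff_forall] using hs
    by_contra! hcon
    have key : ∀ c, Relation.ReflTransGen R a c → c ∈ s := fun c hc => by
      induction hc with
      | refl => exact ha
      | tail _ hxy ih => exact by_contra fun hy => hcon _ ih _ hy hxy
    exact hb (key b (h a b))
  · intro h u v
    by_contra huv
    obtain ⟨x, hx, y, hy, hxy⟩ := h (Finset.univ.filter (Relation.ReflTransGen R u))
      ⟨u, by simp [Relation.ReflTransGen.refl]⟩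
      (fun heq => huv (by simpa using heq.ge (Finset.mem_univ v)))
    simp only [Finset.mem_filter, Finset.mem_univ, true_and] at hx hy
    exact hy (hx.tail hxy)

/-- A tournament on `k` vertices is `𝓢 k`-free iff it is not strongly connected. -/
theorem freeOrient_SFam_top_iff {k : ℕ} (D : (⊤ : SimpleGraph (Fin k)).Orient) :
    FreeOrient (SFam k) D ↔ ¬ IsStrongTourn D := by
  constructor
  · exact fun h hD => h k D ⟨rfl, hD⟩ ⟨id, Function.injective_id, fun _ _ => id⟩
  · rintro hD m T ⟨rfl, hT⟩ ⟨φ, hφ, hcopy⟩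
    refine hD fun u v => ?_
    obtain ⟨a, rfl⟩ := (Finite.injective_iff_surjective.1 hφ) u
    obtain ⟨b, rfl⟩ := (Finite.injective_iff_surjective.1 hφ) v
    exact (hT a b).lift φ hcopy

theorem numOrient_le_two_pow {n : ℕ} (G : SimpleGraph (Fin n)) (F : TournFamily) :
    numOrient G F ≤ 2 ^ Fintype.card G.UpPair := by
  have : Finite G.Orient := .of_equiv _ G.orientEquiv.symm
  calc numOrient G F ≤ Nat.card G.Orient := Nat.card_le_card_of_injective _ Subtype.val_injective
    _ = 2 ^ Fintype.card G.UpPair := by rw [Nat.card_congr G.orientEquiv]; simp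

theorem card_upPair_lt {n : ℕ} {G : SimpleGraph (Fin n)} (hG : G ≠ ⊤) :
    Fintype.card G.UpPair < Fintype.card (⊤ : SimpleGraph (Fin n)).UpPair := by
  obtain ⟨a, b, hab, hadj⟩ := SimpleGraph.ne_top_iff_exists_not_adj.1 hG
  have key : ∃ a b : Fin n, a < b ∧ ¬ G.Adj a b := by
    rcases lt_or_gt_of_ne hab with h | h
    exacts [⟨a, b, h, hadj⟩, ⟨b, a, h, fun h' => hadj h'.symm⟩]
  obtain ⟨a, b, hab, hadj⟩ := key
  refine Fintype.card_lt_of_injective_of_notMem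
    (fun p : G.UpPair => (⟨p.1, p.2.1, p.2.1.ne⟩ : (⊤ : SimpleGraph (Fin n)).UpPair))
    (fun p q h => Subtype.ext (congrArg (fun r => r.1) h)) (b := ⟨(a, b), hab, hab.ne⟩) ?_
  rintro ⟨⟨p, hp⟩, h⟩
  have hp' : p = (a, b) := congrArg (fun r => r.1) h
  subst hp'
  exact hadj hp.2

theorem numOrient_SFam_four_le {G : SimpleGraph (Fin 4)} (hG : G ≠ ⊤) :
    numOrient G (SFam 4) ≤ 32 := by
  have hcard : Fintype.card (⊤ : SimpleGraph (Fin 4)).UpPair = 6 := by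
    rw [Fintype.card_subtype]; simp only [SimpleGraph.top_adj]; decide
  have hlt := card_upPair_lt hG
  calc numOrient G (SFam 4) ≤ 2 ^ Fintype.card G.UpPair := numOrient_le_two_pow G _
    _ ≤ 2 ^ 5 := Nat.pow_le_pow_right (by norm_num) (by omega)

instance decidableArcOf {n : ℕ} (f : (⊤ : SimpleGraph (Fin n)).UpPair → Bool) :
    DecidableRel ((⊤ : SimpleGraph (Fin n)).arcOf f) := fun u v => by
  unfold SimpleGraph.arcOf
  infer_instance

theorem numOrient_top_SFam_four : numOrient (⊤ : SimpleGraph (Fin 4)) (SFam 4) = 40 := by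
  have e : {D : (⊤ : SimpleGraph (Fin 4)).Orient // FreeOrient (SFam 4) D} ≃
      {f : (⊤ : SimpleGraph (Fin 4)).UpPair → Bool //
        ¬ ∀ s : Finset (Fin 4), s.Nonempty → s ≠ Finset.univ →
          ∃ u ∈ s, ∃ v ∉ s, (⊤ : SimpleGraph (Fin 4)).arcOf f u v} :=
    (⊤ : SimpleGraph (Fin 4)).orientEquiv.subtypeEquiv fun D => by
      rw [freeOrient_SFam_top_iff, IsStrongTourn, forall_reflTransGen_iff_exists_arc]
      have hD : (⊤ : SimpleGraph (Fin 4)).arcOf ((⊤ : SimpleGraph (Fin 4)).orientEquiv D) = D.1 :=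
        congrArg Subtype.val ((⊤ : SimpleGraph (Fin 4)).orientEquiv.symm_apply_apply D)
      rw [hD]
  rw [numOrient, Nat.card_congr e, Nat.card_eq_fintype_card]
  decide +kernel

/-- `S_4(4) = 40`, and `K_4` is the unique `4`-vertex graph with `40`
`𝓢₄`-free orientations. -/
theorem max_SFam_four_vertices :
    maxOrient 4 (SFam 4) = 40 ∧
    ∀ G : SimpleGraph (Fin 4), numOrient G (SFam 4) = 40 →
      Nonempty (G ≃g (⊤ : SimpleGraph (Fin 4))) := by
  refine ⟨IsGreatest.csSup_eq ⟨⟨⊤, numOrient_top_SFam_four⟩, ?_⟩, fun G hG => ?_⟩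
  · rintro _ ⟨G, rfl⟩
    by_cases hG : G = ⊤
    · exact hG ▸ numOrient_top_SFam_four.le
    · exact (numOrient_SFam_four_le hG).trans (by norm_num)
  · by_cases h : G = ⊤
    · exact h ▸ ⟨SimpleGraph.Iso.refl⟩
    · have := numOrient_SFam_four_le h
      omega
end
end

section
/- Let 𝓕 be a family of tournaments, let G be a finite simple graph, and let H be an induced subgraph of G such that S = V(G) \ V(H) is an independent set in G. Then for every 𝓕-free orientation H⃗ of H, the number of ways to orient the edges in E(G) \ E(H) extending H⃗ to an 𝓕-free orientation of G equals ∏_{v∈S} c_𝓕(v, H⃗). -/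
open scoped Classical

noncomputable section

universe u

variable {V : Type u}

/-- `c_F(G ∣ H⃗)`: the number of ways to orient the edges of `G` outside the induced
subgraph on `A` extending the orientation `H` to an `F`-free orientation of `G`. -/
def extFull (G : SimpleGraph V) (F : TournFamily) (A : Set V)
    (H : (G.induce A).Orient) : ℕ :=
  Nat.card {D : G.Orient // FreeOrient F D ∧
    ∀ (a b : V) (ha : a ∈ A) (hb : b ∈ A), (D.1 a b ↔ H.1 ⟨a, ha⟩ ⟨b, hb⟩)}

/-- `c_F(v, H⃗)`: the number of ways to orient the edges of `G` between `v` and `A`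
so that the resulting orientation of the induced subgraph on `A ∪ {v}`, extending the
orientation `H` of the induced subgraph on `A`, is `F`-free. -/
def extVert (G : SimpleGraph V) (F : TournFamily) (A : Set V) (v : V)
    (H : (G.induce A).Orient) : ℕ :=
  Nat.card {D : (G.induce (insert v A)).Orient // FreeOrient F D ∧
    ∀ (a b : V) (ha : a ∈ A) (hb : b ∈ A),
      (D.1 ⟨a, Set.mem_insert_of_mem v ha⟩ ⟨b, Set.mem_insert_of_mem v hb⟩ ↔
        H.1 ⟨a, ha⟩ ⟨b, hb⟩)}

/-- The restriction of an orientation of `G` to the subgraph induced on `B`. -/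
def SimpleGraph.Orient.restrict {G : SimpleGraph V} (D : G.Orient) (B : Set V) :
    (G.induce B).Orient :=
  ⟨fun a b => D.1 a b, fun a b h => D.2.1 a b h, fun a b h => D.2.2 a b h⟩

lemma ContainsCopy.of_restrict {G : SimpleGraph V} {D : G.Orient} {B : Set V} {k : ℕ}
    {T : (⊤ : SimpleGraph (Fin k)).Orient} (h : ContainsCopy (D.restrict B) T) :
    ContainsCopy D T := by
  obtain ⟨φ, hφ, hT⟩ := h
  exact ⟨fun i => φ i, Subtype.val_injective.comp hφ, hT⟩

lemma FreeOrient.restrict {G : SimpleGraph V} {F : TournFamily} {D : G.Orient}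
    (h : FreeOrient F D) (B : Set V) : FreeOrient F (D.restrict B) :=
  fun k T hT hc => h k T hT hc.of_restrict

/-- The vertices of a copy of a tournament are pairwise adjacent. -/
lemma SimpleGraph.Orient.adj_of_copy {G : SimpleGraph V} (D : G.Orient) {k : ℕ}
    (T : (⊤ : SimpleGraph (Fin k)).Orient) {φ : Fin k → V}
    (hT : ∀ i j, T.1 i j → D.1 (φ i) (φ j)) {i j : Fin k} (hij : i ≠ j) :
    G.Adj (φ i) (φ j) := by
  by_cases h : T.1 j i
  · exact (D.2.1 _ _ (hT _ _ h)).symm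
  · exact D.2.1 _ _ (hT _ _ ((T.2.2 i j hij).2 h))

/-- A copy of a tournament meets an independent set in at most one vertex, so freeness can be
tested on the complement of the independent set with at most one of its vertices added. -/
lemma FreeOrient.of_restrict {G : SimpleGraph V} {F : TournFamily} {D : G.Orient} {S : Set V}
    (hS : S.Pairwise fun u v => ¬ G.Adj u v) (hA : FreeOrient F (D.restrict Sᶜ))
    (hv : ∀ v ∈ S, FreeOrient F (D.restrict (insert v Sᶜ))) : FreeOrient F D := by
  rintro k T hTF ⟨φ, hφ, hT⟩
  by_cases h : ∃ i, φ i ∈ S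
  · obtain ⟨i, hi⟩ := h
    have hmem : ∀ j, φ j ∈ insert (φ i) Sᶜ := by
      intro j
      by_cases hij : j = i
      · exact Or.inl (congrArg φ hij)
      · exact Or.inr fun hj => hS hj hi (hφ.ne hij) (D.adj_of_copy T hT hij)
    exact hv _ hi k T hTF
      ⟨fun j => ⟨φ j, hmem j⟩, fun a b hab => hφ (congrArg Subtype.val hab), hT⟩
  · push Not at h
    exact hA k T hTF ⟨fun j => ⟨φ j, h j⟩, fun a b hab => hφ (congrArg Subtype.val hab), hT⟩

/-- Orientations of the induced subgraphs on `insert v Sᶜ` for `v ∈ S`, all extending the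
orientation `H` of the induced subgraph on `Sᶜ`, glue to an orientation of `G` when `S` is
independent. -/
lemma SimpleGraph.Orient.exists_glue {G : SimpleGraph V} {S : Set V}
    (hS : S.Pairwise fun u v => ¬ G.Adj u v) (H : (G.induce Sᶜ).Orient)
    (f : ∀ v : S, (G.induce (insert v.1 Sᶜ)).Orient)
    (hf : ∀ (v : S) (a b : V) (ha : a ∈ Sᶜ) (hb : b ∈ Sᶜ),
      (f v).1 ⟨a, Set.mem_insert_of_mem _ ha⟩ ⟨b, Set.mem_insert_of_mem _ hb⟩ ↔
        H.1 ⟨a, ha⟩ ⟨b, hb⟩) :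
    ∃ D : G.Orient, D.restrict Sᶜ = H ∧ ∀ v : S, D.restrict (insert v.1 Sᶜ) = f v := by
  let R : V → V → Prop := fun a b =>
    (∃ ha hb, H.1 ⟨a, ha⟩ ⟨b, hb⟩) ∨ ∃ v : S, ∃ ha hb, (f v).1 ⟨a, ha⟩ ⟨b, hb⟩
  have hRH : ∀ a b (ha : a ∈ Sᶜ) (hb : b ∈ Sᶜ), R a b ↔ H.1 ⟨a, ha⟩ ⟨b, hb⟩ := by
    intro a b ha hb
    refine ⟨?_, fun h => Or.inl ⟨ha, hb, h⟩⟩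
    rintro (⟨_, _, h⟩ | ⟨v, _, _, h⟩)
    · exact h
    · exact (hf v a b ha hb).1 h
  have hRf : ∀ (v : S) a b (ha : a ∈ insert v.1 Sᶜ) (hb : b ∈ insert v.1 Sᶜ),
      R a b ↔ (f v).1 ⟨a, ha⟩ ⟨b, hb⟩ := by
    intro v a b ha hb
    refine ⟨?_, fun h => Or.inr ⟨v, ha, hb, h⟩⟩
    rintro (⟨ha', hb', h⟩ | ⟨w, ha', hb', h⟩)
    · exact (hf v a b ha' hb').2 h
    · by_cases hvw : v = w
      · subst hvw
        exact h
      · have key : ∀ x, x ∈ insert v.1 Sᶜ → x ∈ insert w.1 Sᶜ → x ∈ Sᶜ := by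
          rintro x (rfl | hx) (hx' | hx')
          · exact absurd (Subtype.ext hx') hvw
          · exact hx'
          · exact hx
          · exact hx
        exact (hf v a b (key a ha ha') (key b hb hb')).2
          ((hf w a b (key a ha ha') (key b hb hb')).1 h)
  have hadj : ∀ a b, R a b → G.Adj a b := by
    rintro a b (⟨ha, hb, h⟩ | ⟨v, ha, hb, h⟩)
    · exact H.2.1 _ _ h
    · exact (f v).2.1 _ _ h
  have hor : ∀ a b, G.Adj a b → (R a b ↔ ¬ R b a) := by
    intro a b hab
    have key : ∀ (v : S), a ∈ insert v.1 Sᶜ → b ∈ insert v.1 Sᶜ → (R a b ↔ ¬ R b a) := by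
      intro v ha hb
      rw [hRf v a b ha hb, hRf v b a hb ha]
      exact (f v).2.2 _ _ hab
    by_cases ha : a ∈ S
    · have hb : b ∉ S := fun hb => hS ha hb hab.ne hab
      exact key ⟨a, ha⟩ (Or.inl rfl) (Or.inr hb)
    · by_cases hb : b ∈ S
      · exact key ⟨b, hb⟩ (Or.inr ha) (Or.inl rfl)
      · rw [hRH a b ha hb, hRH b a hb ha]
        exact H.2.2 _ _ hab
  refine ⟨⟨R, hadj, hor⟩, ?_, fun v => ?_⟩
  · exact Subtype.ext (funext fun a => funext fun b => propext (hRH a b a.2 b.2))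
  · exact Subtype.ext (funext fun a => funext fun b => propext (hRf v a b a.2 b.2))

/-- Two orientations agreeing on `insert v Sᶜ` for all `v ∈ S` and on `Sᶜ` are equal when `S`
is independent. -/
lemma SimpleGraph.Orient.ext_of_restrict {G : SimpleGraph V} {S : Set V}
    (hS : S.Pairwise fun u v => ¬ G.Adj u v) {D E : G.Orient}
    (hA : D.restrict Sᶜ = E.restrict Sᶜ)
    (hv : ∀ v ∈ S, D.restrict (insert v Sᶜ) = E.restrict (insert v Sᶜ)) : D = E := by
  have key : ∀ (B : Set V), D.restrict B = E.restrict B →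
      ∀ a b, a ∈ B → b ∈ B → D.1 a b = E.1 a b := fun B h a b ha hb =>
    congrFun (congrFun (congrArg Subtype.val h) ⟨a, ha⟩) ⟨b, hb⟩
  refine Subtype.ext (funext fun a => funext fun b => ?_)
  by_cases hab : G.Adj a b
  · by_cases ha : a ∈ S
    · exact key _ (hv a ha) a b (Or.inl rfl) (Or.inr fun hb => hS ha hb hab.ne hab)
    · by_cases hb : b ∈ S
      · exact key _ (hv b hb) a b (Or.inr ha) (Or.inl rfl)
      · exact key _ hA a b ha hb
  · exact propext ⟨fun h => absurd (D.2.1 a b h) hab, fun h => absurd (E.2.1 a b h) hab⟩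

/-- If `F` is a family of tournaments, `H` is the subgraph of `G` induced on the
complement of an independent set `S`, and `H⃗` is an `F`-free orientation of `H`, then
the number of `F`-free orientations of `G` extending `H⃗` is `∏_{v ∈ S} c_F(v, H⃗)`. -/
theorem extFull_eq_prod_extVert {n : ℕ} (G : SimpleGraph (Fin n)) (F : TournFamily)
    (S : Finset (Fin n)) (hS : (↑S : Set (Fin n)).Pairwise fun u v => ¬ G.Adj u v)
    (H : (G.induce (↑S : Set (Fin n))ᶜ).Orient) (hH : FreeOrient F H) :
    extFull G F (↑S : Set (Fin n))ᶜ H = ∏ v ∈ S, extVert G F (↑S : Set (Fin n))ᶜ v H := by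
  have hprod : ∏ v ∈ S, extVert G F (↑S : Set (Fin n))ᶜ v H =
      ∏ v : (↑S : Set (Fin n)), extVert G F (↑S : Set (Fin n))ᶜ v.1 H :=
    (Finset.prod_coe_sort S fun v => extVert G F (↑S : Set (Fin n))ᶜ v H).symm
  rw [hprod]
  unfold extFull extVert
  rw [← Nat.card_pi]
  refine Nat.card_eq_of_bijective
    (fun D v => ⟨D.1.restrict _, D.2.1.restrict _, fun a b ha hb => D.2.2 a b ha hb⟩) ⟨?_, ?_⟩
  · intro D E hDE
    refine Subtype.ext (SimpleGraph.Orient.ext_of_restrict hS ?_ fun v hv => ?_)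
    · exact Subtype.ext (funext fun a => funext fun b =>
        propext ((D.2.2 a b a.2 b.2).trans (E.2.2 a b a.2 b.2).symm))
    · exact congrArg Subtype.val (congrFun hDE ⟨v, hv⟩)
  · intro f
    obtain ⟨D, hDH, hDf⟩ :=
      SimpleGraph.Orient.exists_glue hS H (fun v => (f v).1) fun v => (f v).2.2
    refine ⟨⟨D, FreeOrient.of_restrict hS (hDH ▸ hH) fun v hv => ?_, fun a b ha hb => ?_⟩, ?_⟩
    · rw [hDf ⟨v, hv⟩]
      exact (f ⟨v, hv⟩).2.1
    · rw [← hDH]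
      rfl
    · exact funext fun v => Subtype.ext (hDf v)
end
end

section
/- Let 𝓕 be a family of tournaments, let G be an n-vertex graph that is 𝓕-extremal (i.e., D(G,𝓕) = max{D(G',𝓕) : G' has n vertices}), and let S ⊆ V(G) be a non-empty independent set. Set H = G − S. Then for any two vertices u, w ∈ S, the vectors u⃗_{H,𝓕} and w⃗_{H,𝓕} are equal; that is, c_𝓕(u, H⃗) = c_𝓕(w, H⃗) for every 𝓕-free orientation H⃗ of H. -/
open scoped Classical

noncomputable section

universe u

variable {V : Type u}

/-- `G` is `F`-extremal: it has the maximum number of `F`-free orientations among all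
graphs on its (`n`-element) vertex set. -/
def IsExtremal {n : ℕ} (G : SimpleGraph (Fin n)) (F : TournFamily) : Prop :=
  ∀ G' : SimpleGraph (Fin n), numOrient G' F ≤ numOrient G F

/-- The map fixing `A` pointwise and sending every other vertex to `x`. -/
def collapseTo (A : Set V) (x p : V) : V := if p ∈ A then p else x

lemma collapseTo_of_mem {A : Set V} (x : V) {p : V} (hp : p ∈ A) : collapseTo A x p = p :=
  if_pos hp

lemma collapseTo_of_notMem {A : Set V} (x : V) {p : V} (hp : p ∉ A) : collapseTo A x p = x :=
  if_neg hp

section Blowup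

variable {G : SimpleGraph V} {A : Set V} {f : V → V}

lemma apply_collapseTo (hfA : ∀ a ∈ A, f a = a) {x p : V} (hp : p ∈ insert (f x) A) :
    f (collapseTo A x p) = p := by
  by_cases h : p ∈ A
  · rw [collapseTo_of_mem x h, hfA p h]
  · rw [collapseTo_of_notMem x h, hp.resolve_right h]

lemma collapseTo_apply (hfA : ∀ a ∈ A, f a = a) (hfS : ∀ x ∉ A, f x ∉ A) {x a : V}
    (ha : a ∈ insert x A) : collapseTo A x (f a) = a := by
  by_cases h : a ∈ A
  · rw [hfA a h, collapseTo_of_mem x h]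
  · rw [collapseTo_of_notMem x (hfS a h), ha.resolve_right h]

lemma apply_mem_insert (hfA : ∀ a ∈ A, f a = a) {x a : V} (ha : a ∈ insert x A) :
    f a ∈ insert (f x) A := by
  rcases ha with rfl | h
  · exact Set.mem_insert _ _
  · exact Set.mem_insert_of_mem _ ((hfA a h).symm ▸ h)

/-- The orientation of the subgraph of `G` induced on `A ∪ {f x}` that an orientation of the
blow-up `G.comap f` induces through its vertex `x`. -/
def pullOrient (hfA : ∀ a ∈ A, f a = a) (D : (G.comap f).Orient) (x : V) :
    (G.induce (insert (f x) A)).Orient :=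
  ⟨fun p q => D.1 (collapseTo A x p) (collapseTo A x q), by
    refine ⟨fun p q h => ?_, fun p q h => D.2.2 _ _ ?_⟩
    · have := D.2.1 _ _ h
      rwa [SimpleGraph.comap_adj, apply_collapseTo hfA p.2, apply_collapseTo hfA q.2] at this
    · rwa [SimpleGraph.comap_adj, apply_collapseTo hfA p.2, apply_collapseTo hfA q.2]⟩

/-- The orientation of `G.induce A` that an orientation of the blow-up `G.comap f` induces. -/
def baseOrient (hfA : ∀ a ∈ A, f a = a) (D : (G.comap f).Orient) : (G.induce A).Orient :=
  ⟨fun p q => D.1 p q, by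
    refine ⟨fun p q h => ?_, fun p q h => D.2.2 _ _ ?_⟩
    · have := D.2.1 _ _ h
      rwa [SimpleGraph.comap_adj, hfA _ p.2, hfA _ q.2] at this
    · rwa [SimpleGraph.comap_adj, hfA _ p.2, hfA _ q.2]⟩

/-- Tournaments embed in cliques, and a clique meets the complement of `A` at most once. -/
lemma exists_range_subset_insert (hI : ∀ x ∉ A, ∀ y ∉ A, ¬ G.Adj x y) (hne : ∃ x, x ∉ A)
    (D : G.Orient) {k : ℕ} (T : (⊤ : SimpleGraph (Fin k)).Orient) (φ : Fin k → V)
    (hφ : ∀ i j, T.1 i j → D.1 (φ i) (φ j)) : ∃ x ∉ A, ∀ i, φ i ∈ insert x A := by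
  by_cases h : ∀ i, φ i ∈ A
  · exact hne.imp fun x hx => ⟨hx, fun i => Set.mem_insert_of_mem _ (h i)⟩
  · push Not at h
    obtain ⟨i, hi⟩ := h
    refine ⟨φ i, hi, fun j => ?_⟩
    by_contra hj
    rw [Set.mem_insert_iff, not_or] at hj
    have hij : i ≠ j := fun h => hj.1 (h ▸ rfl)
    by_cases hT : T.1 i j
    · exact hI _ hi _ hj.2 (D.2.1 _ _ (hφ i j hT))
    · have := (T.2.2 j i hij.symm).2 hT
      exact hI _ hj.2 _ hi (D.2.1 _ _ (hφ j i this))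

lemma freeOrient_iff_pullOrient (F : TournFamily) (hfA : ∀ a ∈ A, f a = a)
    (hfS : ∀ x ∉ A, f x ∉ A) (hI : ∀ x ∉ A, ∀ y ∉ A, ¬ G.Adj x y) (hne : ∃ x, x ∉ A)
    (D : (G.comap f).Orient) :
    FreeOrient F D ↔ ∀ x ∉ A, FreeOrient F (pullOrient hfA D x) := by
  constructor
  · rintro h x - k T hT ⟨φ, hinj, hφ⟩
    refine h k T hT ⟨fun i => collapseTo A x (φ i), fun i j hij => hinj (Subtype.ext ?_), hφ⟩
    rw [← apply_collapseTo hfA (φ i).2, ← apply_collapseTo hfA (φ j).2]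
    exact congrArg f hij
  · rintro h k T hT ⟨φ, hinj, hφ⟩
    obtain ⟨x, hx, hmem⟩ := exists_range_subset_insert
      (fun x hx y hy => hI _ (hfS x hx) _ (hfS y hy)) hne D T φ hφ
    refine h x hx k T hT ⟨fun i => ⟨f (φ i), apply_mem_insert hfA (hmem i)⟩,
      fun i j hij => hinj ?_, fun i j hij => ?_⟩
    · rw [← collapseTo_apply hfA hfS (hmem i), ← collapseTo_apply hfA hfS (hmem j)]
      exact congrArg (collapseTo A x) (congrArg Subtype.val hij)
    · change D.1 (collapseTo A x (f (φ i))) (collapseTo A x (f (φ j)))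
      rw [collapseTo_apply hfA hfS (hmem i), collapseTo_apply hfA hfS (hmem j)]
      exact hφ i j hij

/-- Orientations of the graphs induced on `A ∪ {f x}`, for `x ∉ A`, that agree on `A` glue to an
orientation of the blow-up `G.comap f`. -/
lemma exists_pullOrient_eq (hfA : ∀ a ∈ A, f a = a) (hfS : ∀ x ∉ A, f x ∉ A)
    (hI : ∀ x ∉ A, ∀ y ∉ A, ¬ G.Adj x y) (H : (G.induce A).Orient)
    (E : ∀ x : {x // x ∉ A}, (G.induce (insert (f x) A)).Orient)
    (hE : ∀ (x : {x // x ∉ A}) (a b : V) (ha : a ∈ A) (hb : b ∈ A),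
      (E x).1 ⟨a, Set.mem_insert_of_mem _ ha⟩ ⟨b, Set.mem_insert_of_mem _ hb⟩ ↔
        H.1 ⟨a, ha⟩ ⟨b, hb⟩) :
    ∃ D : (G.comap f).Orient, baseOrient hfA D = H ∧ ∀ x, pullOrient hfA D x.1 = E x := by
  let R : V → V → Prop := fun a b =>
    if ha : a ∈ A then
      if hb : b ∈ A then H.1 ⟨a, ha⟩ ⟨b, hb⟩
      else (E ⟨b, hb⟩).1 ⟨a, Set.mem_insert_of_mem _ ha⟩ ⟨f b, Set.mem_insert _ _⟩
    else
      if hb : b ∈ A then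
        (E ⟨a, ha⟩).1 ⟨f a, Set.mem_insert _ _⟩ ⟨b, Set.mem_insert_of_mem _ hb⟩
      else False
  have hR : ∀ a b, (R a b → (G.comap f).Adj a b) ∧ ((G.comap f).Adj a b → (R a b ↔ ¬ R b a)) := by
    intro a b
    by_cases ha : a ∈ A <;> by_cases hb : b ∈ A <;>
      simp only [R, ha, hb, dif_pos, dif_neg, not_false_eq_true, SimpleGraph.comap_adj]
    · rw [hfA a ha, hfA b hb]
      exact ⟨H.2.1 _ _, H.2.2 ⟨a, ha⟩ ⟨b, hb⟩⟩
    · rw [hfA a ha]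
      exact ⟨(E ⟨b, hb⟩).2.1 _ _,
        (E ⟨b, hb⟩).2.2 ⟨a, Set.mem_insert_of_mem _ ha⟩ ⟨f b, Set.mem_insert _ _⟩⟩
    · rw [hfA b hb]
      exact ⟨(E ⟨a, ha⟩).2.1 _ _,
        (E ⟨a, ha⟩).2.2 ⟨f a, Set.mem_insert _ _⟩ ⟨b, Set.mem_insert_of_mem _ hb⟩⟩
    · exact ⟨False.elim, fun h => (hI _ (hfS a ha) _ (hfS b hb) h).elim⟩
  refine ⟨⟨R, fun a b => (hR a b).1, fun a b => (hR a b).2⟩, ?_, ?_⟩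
  · refine Subtype.ext (funext fun p => funext fun q => ?_)
    simp [baseOrient, R]
  · rintro ⟨x, hx⟩
    refine Subtype.ext (funext fun ⟨p, hp⟩ => funext fun ⟨q, hq⟩ => propext ?_)
    change R (collapseTo A x p) (collapseTo A x q) ↔ _
    by_cases hpA : p ∈ A <;> by_cases hqA : q ∈ A
    · rw [collapseTo_of_mem x hpA, collapseTo_of_mem x hqA, hE ⟨x, hx⟩ p q hpA hqA]
      simp [R, hpA, hqA]
    · obtain rfl : q = f x := hq.resolve_right hqA
      rw [collapseTo_of_mem x hpA, collapseTo_of_notMem x hqA]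
      simp [R, hpA, hx]
    · obtain rfl : p = f x := hp.resolve_right hpA
      rw [collapseTo_of_mem x hqA, collapseTo_of_notMem x hpA]
      simp [R, hqA, hx]
    · obtain rfl : p = f x := hp.resolve_right hpA
      obtain rfl : q = f x := hq.resolve_right hqA
      rw [collapseTo_of_notMem x hpA]
      simp only [R, hx, dif_neg, not_false_eq_true, false_iff]
      exact fun h => G.irrefl ((E ⟨x, hx⟩).2.1 _ _ h)

lemma orient_eq_of_pullOrient_eq (hfA : ∀ a ∈ A, f a = a) (hfS : ∀ x ∉ A, f x ∉ A)
    (hI : ∀ x ∉ A, ∀ y ∉ A, ¬ G.Adj x y) {D D' : (G.comap f).Orient}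
    (hbase : baseOrient hfA D = baseOrient hfA D')
    (hpull : ∀ x ∉ A, pullOrient hfA D x = pullOrient hfA D' x) : D = D' := by
  have key : ∀ x ∉ A, ∀ a ∈ insert x A, ∀ b ∈ insert x A, D.1 a b = D'.1 a b := by
    intro x hx a ha b hb
    have := congrFun₂ (congrArg Subtype.val (hpull x hx))
      ⟨f a, apply_mem_insert hfA ha⟩ ⟨f b, apply_mem_insert hfA hb⟩
    simpa only [pullOrient, collapseTo_apply hfA hfS ha, collapseTo_apply hfA hfS hb] using this
  refine Subtype.ext (funext fun a => funext fun b => ?_)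
  by_cases ha : a ∈ A <;> by_cases hb : b ∈ A
  · exact congrFun₂ (congrArg Subtype.val hbase) ⟨a, ha⟩ ⟨b, hb⟩
  · exact key b hb a (Set.mem_insert_of_mem _ ha) b (Set.mem_insert _ _)
  · exact key a ha a (Set.mem_insert _ _) b (Set.mem_insert_of_mem _ hb)
  · have hno := hI _ (hfS a ha) _ (hfS b hb)
    exact propext ⟨fun h => (hno (D.2.1 _ _ h)).elim, fun h => (hno (D'.2.1 _ _ h)).elim⟩

lemma card_fiber_baseOrient [Fintype V] (F : TournFamily) (hfA : ∀ a ∈ A, f a = a)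
    (hfS : ∀ x ∉ A, f x ∉ A) (hI : ∀ x ∉ A, ∀ y ∉ A, ¬ G.Adj x y) (hne : ∃ x, x ∉ A)
    (H : (G.induce A).Orient) :
    Nat.card {D : {D : (G.comap f).Orient // FreeOrient F D} // baseOrient hfA D.1 = H} =
      ∏ x : {x // x ∉ A}, extVert G F A (f x) H := by
  simp only [extVert]
  rw [← Nat.card_pi]
  have hfree := freeOrient_iff_pullOrient (G := G) F hfA hfS hI hne
  refine Nat.card_congr (Equiv.ofBijective
    (fun D x => ⟨pullOrient hfA D.1.1 x.1, (hfree _).1 D.1.2 x.1 x.2, ?_⟩) ⟨?_, ?_⟩)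
  · intro a b ha hb
    simp only [← D.2, pullOrient, baseOrient, collapseTo_of_mem x.1 ha, collapseTo_of_mem x.1 hb]
  · intro D D' h
    refine Subtype.ext (Subtype.ext (orient_eq_of_pullOrient_eq hfA hfS hI (D.2.trans D'.2.symm)
      fun x hx => ?_))
    exact congrArg Subtype.val (congrFun h ⟨x, hx⟩)
  · intro E
    obtain ⟨D, hbase, hpull⟩ := exists_pullOrient_eq hfA hfS hI H (fun x => (E x).1)
      fun x => (E x).2.2
    refine ⟨⟨⟨D, (hfree D).2 fun x hx => ?_⟩, hbase⟩, funext fun x => Subtype.ext (hpull x)⟩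
    rw [hpull ⟨x, hx⟩]
    exact (E ⟨x, hx⟩).2.1

/-- The number of `F`-free orientations of the blow-up `G.comap f`, where `f` fixes `A` and maps
the independent complement of `A` to itself. -/
lemma numOrient_comap [Fintype V] (F : TournFamily) (hfA : ∀ a ∈ A, f a = a)
    (hfS : ∀ x ∉ A, f x ∉ A) (hI : ∀ x ∉ A, ∀ y ∉ A, ¬ G.Adj x y) (hne : ∃ x, x ∉ A) :
    numOrient (G.comap f) F =
      ∑ H : (G.induce A).Orient, ∏ x : {x // x ∉ A}, extVert G F A (f x) H := by
  simp only [← card_fiber_baseOrient F hfA hfS hI hne, ← Nat.card_sigma]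
  exact Nat.card_congr (Equiv.sigmaFiberEquiv fun D : {D : (G.comap f).Orient //
    FreeOrient F D} => baseOrient hfA D.1).symm

end Blowup

section AMGM

variable {ι : Type*} [Fintype ι] [Nonempty ι]

lemma prod_pow_card_rpow_inv (c : ι → ℝ) (hc : ∀ i, 0 ≤ c i) :
    ∏ i, (c i ^ Fintype.card ι) ^ ((Fintype.card ι : ℝ)⁻¹) = ∏ i, c i :=
  Finset.prod_congr rfl fun i _ => Real.pow_rpow_inv_natCast (hc i) Fintype.card_ne_zero

lemma sum_inv_card : ∑ _i : ι, (Fintype.card ι : ℝ)⁻¹ = 1 := by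
  simp

lemma card_mul_prod_le_sum_pow (c : ι → ℝ) (hc : ∀ i, 0 ≤ c i) :
    Fintype.card ι * ∏ i, c i ≤ ∑ i, c i ^ Fintype.card ι := by
  have h := Real.geom_mean_le_arith_mean_weighted Finset.univ (fun _ => (Fintype.card ι : ℝ)⁻¹)
    (fun i => c i ^ Fintype.card ι) (fun _ _ => by positivity) sum_inv_card
    (fun i _ => pow_nonneg (hc i) _)
  have hpos : (0 : ℝ) < Fintype.card ι := by exact_mod_cast Fintype.card_pos
  rwa [prod_pow_card_rpow_inv c hc, ← Finset.mul_sum, le_inv_mul_iff₀ hpos] at h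

lemma eq_of_card_mul_prod_eq_sum_pow (c : ι → ℝ) (hc : ∀ i, 0 ≤ c i)
    (h : Fintype.card ι * ∏ i, c i = ∑ i, c i ^ Fintype.card ι) (i j : ι) : c i = c j := by
  have hpos : (0 : ℝ) < Fintype.card ι := by exact_mod_cast Fintype.card_pos
  have hiff := Real.geom_mean_eq_arith_mean_weighted_iff_of_pos Finset.univ
    (fun _ => (Fintype.card ι : ℝ)⁻¹) (fun i => c i ^ Fintype.card ι)
    (fun _ _ => by positivity) sum_inv_card (fun i _ => pow_nonneg (hc i) _)
  rw [prod_pow_card_rpow_inv c hc, ← Finset.mul_sum, eq_inv_mul_iff_mul_eq₀ hpos.ne'] at hiff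
  exact (pow_left_inj₀ (hc i) (hc j) Fintype.card_ne_zero).1
    (hiff.1 h i (Finset.mem_univ i) j (Finset.mem_univ j))

/-- If no power sum `∑ h, c i h ^ card ι` exceeds the mixed sum `∑ h, ∏ i, c i h`, then all the
vectors `c i` coincide. -/
lemma eq_of_sum_pow_le_sum_prod {κ : Type*} [Fintype κ] (c : ι → κ → ℝ) (hc : ∀ i h, 0 ≤ c i h)
    (hle : ∀ i, ∑ h, c i h ^ Fintype.card ι ≤ ∑ h, ∏ j, c j h) (i j : ι) : c i = c j := by
  have hpt : ∀ h, Fintype.card ι * ∏ i, c i h ≤ ∑ i, c i h ^ Fintype.card ι :=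
    fun h => card_mul_prod_le_sum_pow (fun i => c i h) fun i => hc i h
  have hsum : ∑ h, ∑ i, c i h ^ Fintype.card ι ≤ ∑ h, Fintype.card ι * ∏ i, c i h := by
    rw [Finset.sum_comm, ← Finset.mul_sum, ← nsmul_eq_mul]
    exact Finset.sum_le_card_nsmul _ _ _ fun i _ => hle i
  have heq := (Finset.sum_eq_sum_iff_of_le fun h _ => hpt h).1
    (le_antisymm (Finset.sum_le_sum fun h _ => hpt h) hsum)
  exact funext fun h => eq_of_card_mul_prod_eq_sum_pow (fun i => c i h) (fun i => hc i h)
    (heq h (Finset.mem_univ h)) i j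

end AMGM

/-- In a graph maximizing the number of `F`-free orientations, any two vertices of the independent
complement of `A` have the same number of extensions for every orientation of `G.induce A`. -/
lemma extVert_eq_of_forall_numOrient_le [Fintype V] {G : SimpleGraph V} {F : TournFamily}
    (hmax : ∀ G' : SimpleGraph V, numOrient G' F ≤ numOrient G F) {A : Set V}
    (hI : ∀ x ∉ A, ∀ y ∉ A, ¬ G.Adj x y) {u w : V} (hu : u ∉ A) (hw : w ∉ A)
    (H : (G.induce A).Orient) : extVert G F A u H = extVert G F A w H := by
  have hne : ∃ x, x ∉ A := ⟨u, hu⟩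
  have : Nonempty {x // x ∉ A} := nonempty_subtype.2 hne
  have hle : ∀ x : {x // x ∉ A},
      ∑ H : (G.induce A).Orient, extVert G F A x H ^ Fintype.card {x // x ∉ A} ≤
        ∑ H : (G.induce A).Orient, ∏ y : {x // x ∉ A}, extVert G F A y H := by
    intro x
    have hS : ∀ y ∉ A, collapseTo A x.1 y ∉ A := fun y hy => by
      rw [collapseTo_of_notMem x.1 hy]
      exact x.2
    have hblow := numOrient_comap (G := G) (f := collapseTo A x.1) F
      (fun a ha => collapseTo_of_mem x.1 ha) hS hI hne
    have hself := numOrient_comap (G := G) (f := id) F (fun a _ => rfl) (fun y hy => hy) hI hne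
    rw [SimpleGraph.comap_id] at hself
    have hcomap := hmax (G.comap (collapseTo A x.1))
    rw [hblow, hself] at hcomap
    refine le_trans (Finset.sum_le_sum fun H _ => ?_) hcomap
    rw [Finset.prod_congr rfl fun (y : {x // x ∉ A}) _ => by rw [collapseTo_of_notMem x.1 y.2]]
    simp
  have heq := eq_of_sum_pow_le_sum_prod
    (fun (x : {x // x ∉ A}) (H : (G.induce A).Orient) => (extVert G F A x H : ℝ))
    (fun _ _ => Nat.cast_nonneg _) (fun x => by exact_mod_cast hle x)
    ⟨u, hu⟩ ⟨w, hw⟩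
  exact_mod_cast congrFun heq H

/-- If `G` is `F`-extremal, `S` is a nonempty independent set of `G` and `H = G - S`,
then for any `u, w ∈ S` the vectors `u⃗_{H,F}` and `w⃗_{H,F}` coincide, i.e.
`c_F(u, H⃗) = c_F(w, H⃗)` for every `F`-free orientation `H⃗` of `H`. -/
theorem extVert_eq_of_isExtremal {n : ℕ} (G : SimpleGraph (Fin n)) (F : TournFamily)
    (hG : IsExtremal G F) (S : Finset (Fin n)) (hSne : S.Nonempty)
    (hS : (↑S : Set (Fin n)).Pairwise fun u v => ¬ G.Adj u v)
    (u w : Fin n) (hu : u ∈ S) (hw : w ∈ S)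
    (H : (G.induce (↑S : Set (Fin n))ᶜ).Orient) (hH : FreeOrient F H) :
    extVert G F (↑S : Set (Fin n))ᶜ u H = extVert G F (↑S : Set (Fin n))ᶜ w H := by
  have hmem : ∀ x, x ∉ (↑S : Set (Fin n))ᶜ ↔ x ∈ S := fun x => by simp
  exact extVert_eq_of_forall_numOrient_le hG
    (fun x hx y hy hxy => hS ((hmem x).1 hx) ((hmem y).1 hy) hxy.ne hxy)
    ((hmem u).2 hu) ((hmem w).2 hw) H
end
end

section
/- Let 𝓕 be a family of tournaments and let G be an n-vertex 𝓕-extremal graph. Then there exists an n-vertex complete multipartite graph G* that is 𝓕-extremal and satisfies |E(G*)| ≥ |E(G)|. -/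
open scoped Classical

noncomputable section

universe u

variable {V : Type u}

/-- A graph is complete multipartite if whenever `v` is non-adjacent to two vertices
`u` and `w`, the vertices `u` and `w` are also non-adjacent (equivalently, the
non-adjacency relation is an equivalence relation on the vertices). -/
def IsCompMultipartite (G : SimpleGraph V) : Prop :=
  ∀ u v w : V, u ≠ v → v ≠ w → ¬ G.Adj u v → ¬ G.Adj v w → ¬ G.Adj u w

/-- The relation `D` with all pairs meeting `s` removed. -/
def restrictOff (s : Set V) (D : V → V → Prop) : V → V → Prop :=
  fun x y => x ∉ s ∧ y ∉ s ∧ D x y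

/-- The `F`-free orientations of `G`, as a finset of relations. -/
def freeRels [Fintype V] [DecidableEq V] (G : SimpleGraph V) (F : TournFamily) :
    Finset (V → V → Prop) :=
  {D | ∃ h, FreeOrient F (⟨D, h⟩ : G.Orient)}

/-- The `F`-free orientations of `G` with `v` isolated that agree with `H` off `{u, v}`. -/
def freeExtensions [Fintype V] [DecidableEq V] (G : SimpleGraph V) (F : TournFamily) (u v : V)
    (H : V → V → Prop) : Finset (V → V → Prop) :=
  {D ∈ freeRels (G.deleteIncidenceSet v) F | restrictOff {u, v} D = H}

theorem mem_freeRels [Fintype V] [DecidableEq V] {G : SimpleGraph V} {F : TournFamily}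
    {D : V → V → Prop} :
    D ∈ freeRels G F ↔ ((∀ u v, D u v → G.Adj u v) ∧ ∀ u v, G.Adj u v → (D u v ↔ ¬ D v u)) ∧
      ∀ (k : ℕ) (T : (⊤ : SimpleGraph (Fin k)).Orient), T ∈ F k →
        ∀ φ : Fin k → V, Function.Injective φ → ¬ ∀ i j, T.1 i j → D (φ i) (φ j) := by
  simp only [freeRels, FreeOrient, ContainsCopy, Finset.mem_filter, Finset.mem_univ, true_and,
    exists_prop, not_exists, not_and]

theorem numOrient_eq_card_freeRels [Fintype V] [DecidableEq V] (G : SimpleGraph V)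
    (F : TournFamily) :
    numOrient G F = (freeRels G F).card := by
  rw [numOrient, Nat.card_congr (Equiv.subtypeSubtypeEquivSubtypeExists _ _),
    Nat.card_eq_fintype_card, Fintype.card_subtype, freeRels]

/-- Isolating a vertex in an `F`-free orientation leaves it `F`-free. -/
theorem restrictOff_mem_freeRels [Fintype V] [DecidableEq V] {G : SimpleGraph V} {F : TournFamily}
    {D : V → V → Prop} (hD : D ∈ freeRels G F) (v : V) :
    restrictOff {v} D ∈ freeRels (G.deleteIncidenceSet v) F := by
  rw [mem_freeRels] at hD ⊢
  obtain ⟨⟨h1, h2⟩, h3⟩ := hD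
  simp only [restrictOff, Set.mem_singleton_iff, SimpleGraph.deleteIncidenceSet_adj]
  refine ⟨⟨fun x y h => ⟨h1 _ _ h.2.2, h.1, h.2.1⟩, fun x y h => ?_⟩, fun k T hT φ hφ h => ?_⟩
  · have := h2 x y h.1
    tauto
  · exact h3 k T hT φ hφ fun i j hij => (h i j hij).2.2

/-- Two `F`-free orientations, one isolating `v` and one isolating `u`, that agree off `{u, v}`
glue to an `F`-free orientation, as no tournament uses two non-adjacent vertices. -/
theorem sup_mem_freeRels [Fintype V] [DecidableEq V] {G : SimpleGraph V} {F : TournFamily} {u v : V}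
    (huv : u ≠ v) (hadj : ¬ G.Adj u v) {D E : V → V → Prop}
    (hD : D ∈ freeRels (G.deleteIncidenceSet v) F) (hE : E ∈ freeRels (G.deleteIncidenceSet u) F)
    (h : restrictOff {u, v} D = restrictOff {u, v} E) : D ⊔ E ∈ freeRels G F := by
  rw [mem_freeRels] at hD hE ⊢
  obtain ⟨⟨d1, d2⟩, d3⟩ := hD
  obtain ⟨⟨e1, e2⟩, e3⟩ := hE
  have agree : ∀ x y, x ≠ u → x ≠ v → y ≠ u → y ≠ v → (D x y ↔ E x y) := by
    intro x y hxu hxv hyu hyv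
    have := congrFun (congrFun h x) y
    simpa [restrictOff, hxu, hxv, hyu, hyv] using this
  have hadj' : ¬ G.Adj v u := fun h => hadj h.symm
  simp only [SimpleGraph.deleteIncidenceSet_adj] at d1 d2 e1 e2
  simp only [Pi.sup_apply, sup_Prop_eq]
  refine ⟨⟨fun x y hxy => hxy.elim (fun h => (d1 _ _ h).1) (fun h => (e1 _ _ h).1),
    fun x y hxy => ?_⟩, fun k T hT φ hφ hc => ?_⟩
  · by_cases hv : x = v ∨ y = v
    · have hx : x ≠ u := by rintro rfl; grind
      have hy : y ≠ u := by rintro rfl; grind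
      have hxy' : ¬ D x y := fun h => hv.elim (d1 _ _ h).2.1 (d1 _ _ h).2.2
      have hyx' : ¬ D y x := fun h => hv.elim (d1 _ _ h).2.2 (d1 _ _ h).2.1
      simpa [hxy', hyx'] using e2 x y ⟨hxy, hx, hy⟩
    · rw [not_or] at hv
      have hd := d2 x y ⟨hxy, hv.1, hv.2⟩
      by_cases hu : x = u ∨ y = u
      · have hxy' : ¬ E x y := fun h => hu.elim (e1 _ _ h).2.1 (e1 _ _ h).2.2
        have hyx' : ¬ E y x := fun h => hu.elim (e1 _ _ h).2.2 (e1 _ _ h).2.1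
        simpa [hxy', hyx'] using hd
      · rw [not_or] at hu
        simpa [agree x y hu.1 hv.1 hu.2 hv.2, agree y x hu.2 hv.2 hu.1 hv.1] using hd
  · by_cases hv : ∃ i, φ i = v
    · by_cases hu : ∃ j, φ j = u
      · obtain ⟨i, rfl⟩ := hv
        obtain ⟨j, rfl⟩ := hu
        have hij : j ≠ i := fun h => huv (by rw [h])
        have ht := T.2.2 j i hij
        by_cases hji : T.1 j i
        · exact (hc j i hji).elim (fun h => hadj (d1 _ _ h).1) (fun h => hadj (e1 _ _ h).1)
        · exact (hc i j (by tauto)).elim (fun h => hadj' (d1 _ _ h).1)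
            (fun h => hadj' (e1 _ _ h).1)
      · push Not at hu
        refine e3 k T hT φ hφ fun i j hij => (hc i j hij).elim (fun h => ?_) id
        exact (agree _ _ (hu i) (d1 _ _ h).2.1 (hu j) (d1 _ _ h).2.2).1 h
    · push Not at hv
      refine d3 k T hT φ hφ fun i j hij => (hc i j hij).elim id (fun h => ?_)
      exact (agree _ _ (e1 _ _ h).2.1 (hv i) (e1 _ _ h).2.2 (hv j)).2 h

/-- Counting `F`-free orientations through their restrictions off two non-adjacent vertices. -/
theorem numOrient_eq_sum [Fintype V] [DecidableEq V] {G : SimpleGraph V} (F : TournFamily) {u v : V}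
    (huv : u ≠ v) (hadj : ¬ G.Adj u v) :
    numOrient G F =
      ∑ H, (freeExtensions G F u v H).card * (freeExtensions G F v u H).card := by
  rw [numOrient_eq_card_freeRels, Finset.card_eq_sum_card_fiberwise
    (f := restrictOff {u, v}) (t := Finset.univ) (fun _ _ => Finset.mem_coe.2 (Finset.mem_univ _))]
  refine Finset.sum_congr rfl fun H _ => ?_
  rw [← Finset.card_product]
  refine Finset.card_nbij' (fun D => (restrictOff {v} D, restrictOff {u} D))
    (fun P => P.1 ⊔ P.2) ?_ ?_ ?_ ?_
  · intro D hD
    simp only [Finset.coe_filter, Set.mem_ofPred_eq] at hD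
    obtain ⟨hD, rfl⟩ := hD
    simp only [Finset.mem_coe, Finset.mem_product, freeExtensions, Finset.mem_filter]
    refine ⟨⟨restrictOff_mem_freeRels hD v, ?_⟩, restrictOff_mem_freeRels hD u, ?_⟩ <;>
    · ext x y
      simp only [restrictOff, Set.mem_insert_iff, Set.mem_singleton_iff]
      tauto
  · rintro ⟨D, E⟩ h
    simp only [Finset.mem_coe, Finset.mem_product, freeExtensions, Finset.mem_filter,
      Set.pair_comm v u] at h
    obtain ⟨⟨hD, rfl⟩, hE, hDE⟩ := h
    simp only [Finset.coe_filter, Set.mem_ofPred_eq]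
    refine ⟨sup_mem_freeRels huv hadj hD hE hDE.symm, ?_⟩
    ext x y
    have := congrFun (congrFun hDE x) y
    simp only [restrictOff, eq_iff_iff, Pi.sup_apply, sup_Prop_eq] at this ⊢
    tauto
  · intro D hD
    simp only [Finset.coe_filter, Set.mem_ofPred_eq, mem_freeRels] at hD
    obtain ⟨⟨⟨h1, -⟩, -⟩, -⟩ := hD
    ext x y
    simp only [restrictOff, Pi.sup_apply, sup_Prop_eq, Set.mem_singleton_iff]
    refine ⟨by tauto, fun h => ?_⟩
    have hG := h1 x y h
    have hne : ¬ (x = u ∧ y = v) := by rintro ⟨rfl, rfl⟩; exact hadj hG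
    have hne' : ¬ (x = v ∧ y = u) := by rintro ⟨rfl, rfl⟩; exact hadj hG.symm
    have hx : ¬ (x = u ∧ x = v) := by rintro ⟨rfl, h⟩; exact huv h
    have hy : ¬ (y = u ∧ y = v) := by rintro ⟨rfl, h⟩; exact huv h
    tauto
  · rintro ⟨D, E⟩ h
    simp only [Finset.mem_coe, Finset.mem_product, freeExtensions, Finset.mem_filter,
      Set.pair_comm v u] at h
    obtain ⟨⟨hD, rfl⟩, hE, hDE⟩ := h
    rw [mem_freeRels] at hD hE
    have d1 := hD.1.1
    have e1 := hE.1.1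
    simp only [SimpleGraph.deleteIncidenceSet_adj] at d1 e1
    refine Prod.ext ?_ ?_ <;>
    · ext x y
      have := congrFun (congrFun hDE x) y
      have d1 := d1 x y
      have e1 := e1 x y
      simp only [restrictOff, eq_iff_iff, Pi.sup_apply, sup_Prop_eq, Set.mem_insert_iff,
        Set.mem_singleton_iff] at this ⊢
      tauto

/-- Relabelling the vertices by an isomorphism preserves `F`-free orientations. -/
theorem comp_mem_freeRels [Fintype V] [DecidableEq V] {G G' : SimpleGraph V} {F : TournFamily}
    (σ : Equiv.Perm V) (hσ : ∀ x y, G'.Adj x y ↔ G.Adj (σ x) (σ y)) {D : V → V → Prop}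
    (hD : D ∈ freeRels G F) : (fun x y => D (σ x) (σ y)) ∈ freeRels G' F := by
  rw [mem_freeRels] at hD ⊢
  obtain ⟨⟨h1, h2⟩, h3⟩ := hD
  exact ⟨⟨fun x y h => (hσ x y).2 (h1 _ _ h), fun x y h => h2 _ _ ((hσ x y).1 h)⟩,
    fun k T hT φ hφ h => h3 k T hT (σ ∘ φ) (σ.injective.comp hφ) h⟩

/-- Swapping the two special vertices identifies free extensions at `v` and at `u`. -/
theorem card_freeExtensions_le_of_swap [Fintype V] [DecidableEq V] {G G' : SimpleGraph V}
    (F : TournFamily) {u v : V} (hσ : ∀ x y, (G'.deleteIncidenceSet v).Adj x y ↔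
      (G.deleteIncidenceSet u).Adj (Equiv.swap u v x) (Equiv.swap u v y)) (H : V → V → Prop) :
    (freeExtensions G F v u H).card ≤ (freeExtensions G' F u v H).card := by
  refine Finset.card_le_card_of_injOn
    (fun D x y => D (Equiv.swap u v x) (Equiv.swap u v y)) ?_ ?_
  · intro D hD
    simp only [freeExtensions, Finset.coe_filter, Set.mem_ofPred_eq] at hD ⊢
    obtain ⟨hD, rfl⟩ := hD
    refine ⟨comp_mem_freeRels _ hσ hD, ?_⟩
    ext x y
    simp only [restrictOff, Set.mem_insert_iff, Set.mem_singleton_iff, not_or]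
    constructor
    · rintro ⟨⟨hx, hx'⟩, ⟨hy, hy'⟩, h⟩
      rw [Equiv.swap_apply_of_ne_of_ne hx hx', Equiv.swap_apply_of_ne_of_ne hy hy'] at h
      exact ⟨⟨hx', hx⟩, ⟨hy', hy⟩, h⟩
    · rintro ⟨⟨hx', hx⟩, ⟨hy', hy⟩, h⟩
      rw [Equiv.swap_apply_of_ne_of_ne hx hx', Equiv.swap_apply_of_ne_of_ne hy hy']
      exact ⟨⟨hx, hx'⟩, ⟨hy, hy'⟩, h⟩
  · intro D _ E _ h
    ext x y
    simpa using congrFun (congrFun h (Equiv.swap u v x)) (Equiv.swap u v y)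

/-- Replacing `u` by a clone of the non-adjacent vertex `v` squares the extension counts at `v`. -/
theorem sum_sq_le_numOrient_replaceVertex [Fintype V] [DecidableEq V] {G : SimpleGraph V}
    (F : TournFamily) {u v : V} (huv : u ≠ v) (hadj : ¬ G.Adj u v) :
    ∑ H, (freeExtensions G F v u H).card ^ 2 ≤ numOrient (G.replaceVertex v u) F := by
  have hadj' : ¬ G.Adj v u := fun h => hadj h.symm
  have hdel : (G.replaceVertex v u).deleteIncidenceSet u = G.deleteIncidenceSet u := by
    ext x y
    simp only [SimpleGraph.deleteIncidenceSet_adj, SimpleGraph.replaceVertex]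
    grind
  rw [numOrient_eq_sum F huv fun h => G.not_adj_replaceVertex_same v u h.symm]
  refine Finset.sum_le_sum fun H _ => ?_
  have heq : freeExtensions (G.replaceVertex v u) F v u H = freeExtensions G F v u H := by
    rw [freeExtensions, freeExtensions, hdel]
  rw [heq, sq]
  refine Nat.mul_le_mul_right _ (card_freeExtensions_le_of_swap F (fun x y => ?_) H)
  simp only [SimpleGraph.deleteIncidenceSet_adj, SimpleGraph.replaceVertex, Equiv.swap_apply_def]
  grind [SimpleGraph.irrefl]

theorem two_mul_numOrient_le [Fintype V] [DecidableEq V] {G : SimpleGraph V} (F : TournFamily)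
    {u v : V} (huv : u ≠ v) (hadj : ¬ G.Adj u v) :
    2 * numOrient G F ≤
      numOrient (G.replaceVertex v u) F + numOrient (G.replaceVertex u v) F := by
  refine le_trans ?_ (add_le_add (sum_sq_le_numOrient_replaceVertex F huv hadj)
    (sum_sq_le_numOrient_replaceVertex F huv.symm fun h => hadj h.symm))
  rw [numOrient_eq_sum F huv hadj, Finset.mul_sum, ← Finset.sum_add_distrib]
  refine Finset.sum_le_sum fun H _ => ?_
  rw [← mul_assoc, add_comm]
  exact two_mul_le_add_sq _ _

theorem IsExtremal.replaceVertex {n : ℕ} {G : SimpleGraph (Fin n)} {F : TournFamily}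
    (hG : IsExtremal G F) {u v : Fin n} (huv : u ≠ v) (hadj : ¬ G.Adj u v) :
    IsExtremal (G.replaceVertex v u) F := by
  intro G'
  have h := two_mul_numOrient_le F huv hadj
  have h1 := hG (G.replaceVertex u v)
  have h2 := hG G'
  omega

/-- Non-adjacent vertices of an extremal graph with the most edges have comparable, hence equal,
degrees. -/
theorem degree_le_of_forall_card_edgeFinset_le {n : ℕ} {G : SimpleGraph (Fin n)}
    {F : TournFamily} (hG : IsExtremal G F)
    (hmax : ∀ G' : SimpleGraph (Fin n), IsExtremal G' F →
      G'.edgeFinset.card ≤ G.edgeFinset.card)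
    {u v : Fin n} (huv : u ≠ v) (hadj : ¬ G.Adj u v) : G.degree v ≤ G.degree u := by
  have h := hmax _ (hG.replaceVertex huv hadj)
  have hc := G.card_edgeFinset_replaceVertex_of_not_adj (s := v) (t := u) fun h => hadj h.symm
  have hle := G.degree_le_card_edgeFinset u
  have : G.edgeFinset.card + G.degree v - G.degree u ≤ G.edgeFinset.card := by
    rw [← hc]; convert h
  omega

/-- For every `F`-extremal graph `G` on `n` vertices there is an `F`-extremal complete
multipartite graph on `n` vertices with at least as many edges as `G`. -/
theorem exists_isExtremal_isCompMultipartite {n : ℕ} (G : SimpleGraph (Fin n))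
    (F : TournFamily) (hG : IsExtremal G F) :
    ∃ G' : SimpleGraph (Fin n), IsCompMultipartite G' ∧ IsExtremal G' F ∧
      G.edgeFinset.card ≤ G'.edgeFinset.card := by
  obtain ⟨M, hM, hmax⟩ := Set.exists_max_image {G' : SimpleGraph (Fin n) | IsExtremal G' F}
    (fun G' => G'.edgeFinset.card) (Set.toFinite _) ⟨G, hG⟩
  refine ⟨M, fun u v w huv hvw hnuv hnvw huw => ?_, hM, hmax G hG⟩
  have hnvu : ¬ M.Adj v u := fun h => hnuv h.symm
  have e1 := degree_le_of_forall_card_edgeFinset_le hM hmax huv hnuv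
  have e2 := degree_le_of_forall_card_edgeFinset_le hM hmax huv.symm hnvu
  have e3 := degree_le_of_forall_card_edgeFinset_le hM hmax hvw.symm fun h => hnvw h.symm
  have e4 := degree_le_of_forall_card_edgeFinset_le hM hmax hvw hnvw
  obtain ⟨C, hC, hcard, hCadj⟩ : ∃ C : SimpleGraph (Fin n), IsExtremal C F ∧
      C.edgeFinset.card = M.edgeFinset.card ∧ ∀ x y, C.Adj x y ↔
        if x = u then if y = u then False else M.Adj v y
        else if y = u then M.Adj x v else M.Adj x y := by
    refine ⟨_, hM.replaceVertex huv hnuv, ?_, fun x y => Iff.rfl⟩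
    have hc := M.card_edgeFinset_replaceVertex_of_not_adj hnvu
    have : M.edgeFinset.card + M.degree v - M.degree u = M.edgeFinset.card := by omega
    rw [← this, ← hc]
    congr!
  have hwu : w ≠ u := huw.ne'
  have hnwv : ¬ M.Adj w v := fun h => hnvw h.symm
  have hadj : ¬ C.Adj w v := by
    rw [hCadj, if_neg hwu, if_neg huv.symm]
    exact hnwv
  have hdeg := degree_le_of_forall_card_edgeFinset_le hC
    (fun G' h => (hmax G' h).trans hcard.ge) hvw.symm hadj
  have hv : C.degree v = M.degree v := by
    simp only [← SimpleGraph.card_neighborFinset_eq_degree]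
    congr 1
    ext x
    rw [SimpleGraph.mem_neighborFinset, SimpleGraph.mem_neighborFinset, hCadj, if_neg huv.symm]
    split_ifs with hx
    · subst hx
      simp [hnvu]
    · rfl
  have hw : C.degree w < M.degree w := by
    simp only [← SimpleGraph.card_neighborFinset_eq_degree]
    refine Finset.card_lt_card (Finset.ssubset_iff_of_subset (fun x => ?_) |>.2 ⟨u, ?_, ?_⟩)
    · rw [SimpleGraph.mem_neighborFinset, SimpleGraph.mem_neighborFinset, hCadj, if_neg hwu]
      split_ifs
      · exact fun h => absurd h hnwv
      · exact id
    · simpa using huw.symm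
    · rw [SimpleGraph.mem_neighborFinset, hCadj, if_neg hwu, if_pos rfl]
      exact hnwv
  omega
end
end
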